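/- arXiv:1804.02227 — 2 statements merged into one kernel-verified Lean document; each statement's English description precedes it below -/
import Mathlib

section
/- Let p > 0 and α be such that max(−1, p−2) < α < 2p−2, and let μ be a finite positive Borel measure on [0,1) which is a Carleson measure. Then for every f in the Dirichlet-type space 𝒟^p_α one has ∫_{[0,1)} |f(t)| dμ(t) < ∞; consequently, for every z in the unit disc 𝔻 the integral I_μ f(z) = ∫_{[0,1)} f(t)/(1 − t z) dμ(t) converges absolutely and uniformly on compact subsets of 𝔻, and I_μ f is analytic in 𝔻. -/
open MeasureTheory Set Metric Filter Asymptotics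
open scoped ENNReal Topology

/-- Normalized area measure on `ℂ`: Lebesgue area divided by `π`,
so that the unit disc has total mass `1`. -/
noncomputable def dA : Measure ℂ := (ENNReal.ofReal Real.pi)⁻¹ • volume

/-- The (weighted) Bergman norm `‖f‖_{A^p_α} = ((α+1) ∫_𝔻 (1-|z|²)^α |f(z)|^p dA)^{1/p}`,
as an extended real number. -/
noncomputable def bergmanNorm (p α : ℝ) (f : ℂ → ℂ) : ℝ≥0∞ :=
  (ENNReal.ofReal (α + 1) *
    ∫⁻ z in ball (0 : ℂ) 1, ENNReal.ofReal ((1 - ‖z‖ ^ 2) ^ α * ‖f z‖ ^ p) ∂dA) ^ (1 / p)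

/-- The Dirichlet-type norm `‖f‖_{𝒟^p_α} = |f(0)| + ‖f′‖_{A^p_α}`. -/
noncomputable def dirichletNorm (p α : ℝ) (f : ℂ → ℂ) : ℝ≥0∞ :=
  ENNReal.ofReal ‖f 0‖ + bergmanNorm p α (deriv f)

/-- The Hardy `H^1` norm `sup_{0 ≤ r < 1} (2π)⁻¹ ∫_0^{2π} |f(re^{iθ})| dθ`. -/
noncomputable def hardyNorm (f : ℂ → ℂ) : ℝ≥0∞ :=
  ⨆ r ∈ Ico (0 : ℝ) 1,
    (ENNReal.ofReal (2 * Real.pi))⁻¹ *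
      ∫⁻ θ in Ioc (0 : ℝ) (2 * Real.pi),
        ENNReal.ofReal ‖f ((r : ℂ) * Complex.exp ((θ : ℂ) * Complex.I))‖

/-- The operator `I_μ f(z) = ∫_{[0,1)} f(t)/(1-tz) dμ(t)`. -/
noncomputable def Imu (μ : Measure ℝ) (f : ℂ → ℂ) (z : ℂ) : ℂ :=
  ∫ t : ℝ, f (t : ℂ) / (1 - (t : ℂ) * z) ∂μ

/-- The moment of order `n` of `μ`. -/
noncomputable def moment (μ : Measure ℝ) (n : ℕ) : ℝ := ∫ t : ℝ, t ^ n ∂μ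

/-- `M_∞(r, f) = sup_{|z| = r} |f(z)|`. -/
noncomputable def Minf (f : ℂ → ℂ) (r : ℝ) : ℝ := ⨆ z ∈ sphere (0 : ℂ) r, ‖f z‖

/-!
The mean value inequality for `|f′|^p` on discs of radius comparable to `1 - |z|` gives
`|f′(z)| ≤ D (1 - |z|)^{-(α+2)/p}`. For `p < 1` the inequality does not follow from Jensen, but
up to a constant it is elementary: where `(r - |z - a|)^{2/p} |g(z)|` is maximal, `|g|` is
controlled by `|g(z)|` on a disc around `z`, so by the Schwarz lemma it stays above `|g(z)| / 2`
on a smaller one. Integrating along the radius gives `|f(t)| ≤ |f(0)| + M (1 - t)^{-γ}` for some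
`γ < s`, where `s = 1` for a Carleson measure, and a dyadic decomposition of `[0,1)` shows that
`(1 - t)^{-γ}` is integrable against an `s`-Carleson measure. Once `f` is integrable, the kernel
bound `|1 - t z| ≥ 1 - |z|` reduces the rest to dominated convergence.
-/

variable {X E : Type*}

lemma exists_ball_subset_forall_norm_le_two_rpow_mul [PseudoMetricSpace X] [ProperSpace X]
    [NormedAddCommGroup E] {g : X → E} {a : X} {r q : ℝ} (hq : 0 < q) (hr : 0 < r)
    (hg : ContinuousOn g (closedBall a r)) (hga : g a ≠ 0) :
    ∃ z : X, ∃ δ > 0, ball z δ ⊆ ball a r ∧ r ^ q * ‖g a‖ ≤ (2 * δ) ^ q * ‖g z‖ ∧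
      ∀ w ∈ ball z δ, ‖g w‖ ≤ 2 ^ q * ‖g z‖ := by
  have ha : a ∈ closedBall a r := mem_closedBall_self hr.le
  have hcont : ContinuousOn (fun w => (r - dist w a) ^ q * ‖g w‖) (closedBall a r) :=
    (Continuous.rpow_const (by fun_prop) fun _ => Or.inr hq.le).continuousOn.mul hg.norm
  obtain ⟨z, hz, hmax⟩ := (isCompact_closedBall a r).exists_isMaxOn ⟨a, ha⟩ hcont
  rw [isMaxOn_iff] at hmax
  have hzr : dist z a < r := by
    refine (mem_closedBall.1 hz).lt_of_ne fun h => ?_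
    have hpos : 0 < r ^ q * ‖g a‖ := mul_pos (Real.rpow_pos_of_pos hr q) (norm_pos_iff.2 hga)
    have := hmax a ha
    simp only [dist_self, sub_zero, h, sub_self, Real.zero_rpow hq.ne', zero_mul] at this
    exact this.not_gt hpos
  obtain ⟨δ, hδ⟩ : ∃ δ, 2 * δ = r - dist z a := ⟨(r - dist z a) / 2, by ring⟩
  have hδ0 : 0 < δ := by linarith
  have hdist : ∀ w ∈ ball z δ, dist w a < r - δ := fun w hw => by
    linarith [dist_triangle w z a, mem_ball.1 hw]
  refine ⟨z, δ, hδ0, fun w hw => mem_ball.2 (by linarith [hdist w hw]), ?_, fun w hw => ?_⟩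
  · simpa [hδ] using hmax a ha
  · refine le_of_mul_le_mul_left ?_ (Real.rpow_pos_of_pos hδ0 q)
    calc δ ^ q * ‖g w‖ ≤ (r - dist w a) ^ q * ‖g w‖ := by gcongr; linarith [hdist w hw]
      _ ≤ (r - dist z a) ^ q * ‖g z‖ := hmax w (mem_closedBall.2 (by linarith [hdist w hw]))
      _ = δ ^ q * (2 ^ q * ‖g z‖) := by
        rw [← hδ, Real.mul_rpow zero_le_two hδ0.le]; ring

lemma half_norm_le_norm_of_forall_norm_le_mul [NormedAddCommGroup E] [NormedSpace ℂ E]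
    {g : ℂ → E} {z w : ℂ} {δ K : ℝ} (hK : 1 ≤ K) (hg : DifferentiableOn ℂ g (ball z δ))
    (hbound : ∀ w ∈ ball z δ, ‖g w‖ ≤ K * ‖g z‖) (hw : w ∈ ball z (δ / (4 * K))) :
    ‖g z‖ / 2 ≤ ‖g w‖ := by
  have hK4 : 0 < 4 * K := by linarith
  have hwδ : dist w z < δ / (4 * K) := hw
  have hδ : 0 < δ := (div_pos_iff_of_pos_right hK4).1 (dist_nonneg.trans_lt hwδ)
  have hmaps : MapsTo g (ball z δ) (closedBall (g z) (2 * K * ‖g z‖)) := fun v hv => by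
    rw [mem_closedBall, dist_eq_norm]
    nlinarith [norm_sub_le (g v) (g z), hbound v hv, norm_nonneg (g z)]
  have hdist : dist (g w) (g z) ≤ ‖g z‖ / 2 :=
    calc dist (g w) (g z) ≤ 2 * K * ‖g z‖ / δ * dist w z :=
          Complex.dist_le_div_mul_dist_of_mapsTo_ball hg hmaps
            (ball_subset_ball (div_le_self hδ.le (by linarith)) hw)
      _ ≤ 2 * K * ‖g z‖ / δ * (δ / (4 * K)) := by gcongr
      _ = ‖g z‖ / 2 := by field_simp; ring
  rw [dist_comm, dist_eq_norm] at hdist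
  linarith [norm_sub_norm_le (g z) (g w)]

lemma exists_ball_subset_forall_half_norm_le [NormedAddCommGroup E] [NormedSpace ℂ E]
    {g : ℂ → E} {a : ℂ} {r q : ℝ} (hq : 0 < q) (hr : 0 < r) (hg : DiffContOnCl ℂ g (ball a r))
    (hga : g a ≠ 0) :
    ∃ z : ℂ, ∃ ρ > 0, ball z ρ ⊆ ball a r ∧ r ^ q * ‖g a‖ ≤ (8 * 2 ^ q * ρ) ^ q * ‖g z‖ ∧
      ∀ w ∈ ball z ρ, ‖g z‖ / 2 ≤ ‖g w‖ := by
  obtain ⟨z, δ, hδ, hsub, hga_le, hbound⟩ :=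
    exists_ball_subset_forall_norm_le_two_rpow_mul hq hr hg.continuousOn_ball hga
  have hK : (1 : ℝ) ≤ 2 ^ q := Real.one_le_rpow one_le_two hq.le
  have hball : ball z (δ / (4 * 2 ^ q)) ⊆ ball z δ :=
    ball_subset_ball (div_le_self hδ.le (by linarith))
  have hδ_eq : 8 * 2 ^ q * (δ / (4 * 2 ^ q)) = 2 * δ := by field_simp; ring
  refine ⟨z, δ / (4 * 2 ^ q), by positivity, hball.trans hsub, by rwa [hδ_eq], fun w => ?_⟩
  exact half_norm_le_norm_of_forall_norm_le_mul hK (hg.differentiableOn.mono hsub) hbound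

lemma volume_ball_eq_ofReal (c : ℂ) {r : ℝ} (hr : 0 ≤ r) :
    volume (ball c r) = ENNReal.ofReal (r ^ 2 * Real.pi) := by
  rw [Complex.volume_ball, ENNReal.ofReal_mul (by positivity), ENNReal.ofReal_pow hr,
    ← NNReal.coe_real_pi, ENNReal.ofReal_coe_nnreal]

lemma exists_norm_rpow_mul_volume_ball_le_setLIntegral [NormedAddCommGroup E] [NormedSpace ℂ E]
    {p : ℝ} (hp : 0 < p) :
    ∃ C : ℝ, 0 ≤ C ∧ ∀ (g : ℂ → E) (a : ℂ) (r : ℝ), DiffContOnCl ℂ g (ball a r) →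
      ENNReal.ofReal (‖g a‖ ^ p) * volume (ball a r) ≤
        ENNReal.ofReal C * ∫⁻ w in ball a r, ENNReal.ofReal (‖g w‖ ^ p) := by
  have hq : 0 < 2 / p := by positivity
  have hrpow : ∀ x : ℝ, 0 ≤ x → (x ^ (2 / p)) ^ p = x ^ 2 := fun x hx => by
    rw [← Real.rpow_mul hx, div_mul_cancel₀ _ hp.ne', Real.rpow_two]
  set A : ℝ := 8 * 2 ^ (2 / p)
  refine ⟨A ^ 2 * 2 ^ p, by positivity, fun g a r hg => ?_⟩
  rcases le_or_gt r 0 with hr | hr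
  · simp [ball_eq_empty.2 hr]
  rcases eq_or_ne (g a) 0 with hga | hga
  · simp [hga, Real.zero_rpow hp.ne']
  obtain ⟨z, ρ, hρ, hsub, hga_le, hlower⟩ := exists_ball_subset_forall_half_norm_le hq hr hg hga
  have hpow : r ^ 2 * ‖g a‖ ^ p ≤ (A * ρ) ^ 2 * ‖g z‖ ^ p := by
    have := Real.rpow_le_rpow (by positivity) hga_le hp.le
    rwa [Real.mul_rpow (by positivity) (norm_nonneg _),
      Real.mul_rpow (by positivity) (norm_nonneg _), hrpow r hr.le, hrpow _ (by positivity)] at this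
  calc ENNReal.ofReal (‖g a‖ ^ p) * volume (ball a r)
      = ENNReal.ofReal (r ^ 2 * ‖g a‖ ^ p * Real.pi) := by
        rw [volume_ball_eq_ofReal a hr.le, ← ENNReal.ofReal_mul (by positivity)]
        ring_nf
    _ ≤ ENNReal.ofReal ((A * ρ) ^ 2 * ‖g z‖ ^ p * Real.pi) := by gcongr
    _ = ENNReal.ofReal (A ^ 2 * 2 ^ p) *
          ∫⁻ _ in ball z ρ, ENNReal.ofReal ((‖g z‖ / 2) ^ p) := by
        rw [setLIntegral_const, volume_ball_eq_ofReal z hρ.le,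
          ← ENNReal.ofReal_mul (by positivity), ← ENNReal.ofReal_mul (by positivity),
          Real.div_rpow (norm_nonneg _) zero_le_two]
        congr 1
        field_simp
    _ ≤ ENNReal.ofReal (A ^ 2 * 2 ^ p) * ∫⁻ w in ball z ρ, ENNReal.ofReal (‖g w‖ ^ p) := by
        gcongr _ * ?_
        refine setLIntegral_mono' measurableSet_ball fun w hw => ?_
        gcongr
        exact hlower w hw
    _ ≤ ENNReal.ofReal (A ^ 2 * 2 ^ p) * ∫⁻ w in ball a r, ENNReal.ofReal (‖g w‖ ^ p) := by
        gcongr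

lemma min_rpow_mul_rpow_le_rpow {b c x y : ℝ} (hb : 0 < b) (hy : 0 < y) (hbx : b * y ≤ x)
    (hxc : x ≤ c * y) (α : ℝ) : min (b ^ α) (c ^ α) * y ^ α ≤ x ^ α := by
  have hx : 0 < x := (mul_pos hb hy).trans_le hbx
  have hc : 0 < c := pos_of_mul_pos_left (hx.trans_le hxc) hy.le
  rcases le_total 0 α with hα | hα
  · calc min (b ^ α) (c ^ α) * y ^ α ≤ b ^ α * y ^ α := by gcongr; exact min_le_left _ _
      _ = (b * y) ^ α := (Real.mul_rpow hb.le hy.le).symm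
      _ ≤ x ^ α := by gcongr
  · calc min (b ^ α) (c ^ α) * y ^ α ≤ c ^ α * y ^ α := by gcongr; exact min_le_right _ _
      _ = (c * y) ^ α := (Real.mul_rpow hc.le hy.le).symm
      _ ≤ x ^ α := Real.rpow_le_rpow_of_nonpos hx hxc hα

lemma exists_mul_setLIntegral_ball_le_setLIntegral_weight [NormedAddCommGroup E]
    [MeasurableSpace E] [OpensMeasurableSpace E] (ν : Measure E) (α : ℝ) :
    ∃ m > 0, ∀ z ∈ ball (0 : E) 1, ∀ φ : E → ℝ≥0∞,
      ENNReal.ofReal (m * (1 - ‖z‖) ^ α) * ∫⁻ w in ball z ((1 - ‖z‖) / 2), φ w ∂ν ≤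
        ∫⁻ w in ball (0 : E) 1, ENNReal.ofReal ((1 - ‖w‖ ^ 2) ^ α) * φ w ∂ν := by
  refine ⟨min ((1 / 2) ^ α) (3 ^ α), by positivity, fun z hz φ => ?_⟩
  have hz1 : 0 < 1 - ‖z‖ := sub_pos.2 (mem_ball_zero_iff.1 hz)
  have hnear : ∀ w ∈ ball z ((1 - ‖z‖) / 2), |‖w‖ - ‖z‖| < (1 - ‖z‖) / 2 := fun w hw =>
    (abs_norm_sub_norm_le w z).trans_lt (mem_ball_iff_norm.1 hw)
  have hsub : ball z ((1 - ‖z‖) / 2) ⊆ ball 0 1 := fun w hw => by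
    rw [mem_ball_zero_iff]
    linarith [(abs_lt.1 (hnear w hw)).2]
  rw [← lintegral_const_mul' _ _ ENNReal.ofReal_ne_top]
  refine (setLIntegral_mono' measurableSet_ball fun w hw => ?_).trans (lintegral_mono_set hsub)
  obtain ⟨hlower, hupper⟩ := abs_lt.1 (hnear w hw)
  gcongr
  exact min_rpow_mul_rpow_le_rpow (by norm_num) hz1 (by nlinarith [norm_nonneg w])
    (by nlinarith [norm_nonneg w]) α

lemma bergmanNorm_rpow {p : ℝ} (hp : p ≠ 0) (α : ℝ) (g : ℂ → ℂ) :
    bergmanNorm p α g ^ p = ENNReal.ofReal ((α + 1) / Real.pi) *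
      ∫⁻ z in ball (0 : ℂ) 1, ENNReal.ofReal ((1 - ‖z‖ ^ 2) ^ α * ‖g z‖ ^ p) := by
  rw [bergmanNorm, ← ENNReal.rpow_mul, one_div_mul_cancel hp, ENNReal.rpow_one, dA,
    Measure.restrict_smul, lintegral_smul_measure, smul_eq_mul, ← mul_assoc,
    ENNReal.ofReal_div_of_pos Real.pi_pos, div_eq_mul_inv]

lemma exists_rpow_mul_norm_rpow_le_bergmanNorm_rpow {p α : ℝ} (hp : 0 < p) (hα : -1 < α) :
    ∃ C : ℝ, 0 ≤ C ∧ ∀ g : ℂ → ℂ, DifferentiableOn ℂ g (ball 0 1) → ∀ z ∈ ball (0 : ℂ) 1,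
      ENNReal.ofReal ((1 - ‖z‖) ^ (α + 2) * ‖g z‖ ^ p) ≤
        ENNReal.ofReal C * bergmanNorm p α g ^ p := by
  obtain ⟨C, hC, hmean⟩ := exists_norm_rpow_mul_volume_ball_le_setLIntegral (E := ℂ) hp
  obtain ⟨m, hm, hweight⟩ :=
    exists_mul_setLIntegral_ball_le_setLIntegral_weight (volume : Measure ℂ) α
  have hα1 : 0 < α + 1 := by linarith
  refine ⟨4 * C / (m * (α + 1)), by positivity, fun g hg z hz => ?_⟩
  have hy : 0 < 1 - ‖z‖ := sub_pos.2 (mem_ball_zero_iff.1 hz)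
  set y := 1 - ‖z‖
  set J := ∫⁻ w in ball (0 : ℂ) 1, ENNReal.ofReal ((1 - ‖w‖ ^ 2) ^ α * ‖g w‖ ^ p)
  have hsub : closedBall z (y / 2) ⊆ ball 0 1 := fun w hw => by
    rw [mem_ball_zero_iff]
    linarith [norm_sub_norm_le w z, mem_closedBall_iff_norm.1 hw]
  have hJ : ENNReal.ofReal (m * y ^ α) *
      ∫⁻ w in ball z (y / 2), ENNReal.ofReal (‖g w‖ ^ p) ≤ J := by
    refine (hweight z hz _).trans_eq (setLIntegral_congr_fun measurableSet_ball fun w _ => ?_)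
    exact (ENNReal.ofReal_mul' (by positivity)).symm
  calc ENNReal.ofReal (y ^ (α + 2) * ‖g z‖ ^ p)
      = ENNReal.ofReal (4 / (m * Real.pi)) * (ENNReal.ofReal (m * y ^ α) *
          (ENNReal.ofReal (‖g z‖ ^ p) * volume (ball z (y / 2)))) := by
        rw [volume_ball_eq_ofReal z (by positivity), ← ENNReal.ofReal_mul (by positivity),
          ← ENNReal.ofReal_mul (by positivity), ← ENNReal.ofReal_mul (by positivity),
          Real.rpow_add hy, Real.rpow_two]
        congr 1
        field_simp
        ring
    _ ≤ ENNReal.ofReal (4 / (m * Real.pi)) * (ENNReal.ofReal (m * y ^ α) *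
          (ENNReal.ofReal C * ∫⁻ w in ball z (y / 2), ENNReal.ofReal (‖g w‖ ^ p))) := by
        gcongr _ * (_ * ?_)
        exact hmean g z (y / 2) (hg.diffContOnCl_ball hsub)
    _ = ENNReal.ofReal (4 / (m * Real.pi)) * ENNReal.ofReal C * (ENNReal.ofReal (m * y ^ α) *
          ∫⁻ w in ball z (y / 2), ENNReal.ofReal (‖g w‖ ^ p)) := by ring
    _ ≤ ENNReal.ofReal (4 / (m * Real.pi)) * ENNReal.ofReal C * J := by gcongr
    _ = ENNReal.ofReal (4 * C / (m * (α + 1))) * bergmanNorm p α g ^ p := by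
        rw [bergmanNorm_rpow hp.ne', ← mul_assoc, ← ENNReal.ofReal_mul (by positivity),
          ← ENNReal.ofReal_mul (by positivity)]
        congr 2
        field_simp

lemma exists_norm_le_bergmanNorm_mul_rpow {p α : ℝ} (hp : 0 < p) (hα : -1 < α) :
    ∃ C : ℝ, 0 ≤ C ∧ ∀ g : ℂ → ℂ, DifferentiableOn ℂ g (ball 0 1) → bergmanNorm p α g < ⊤ →
      ∀ z ∈ ball (0 : ℂ) 1,
        ‖g z‖ ≤ C * (bergmanNorm p α g).toReal * (1 - ‖z‖) ^ (-((α + 2) / p)) := by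
  obtain ⟨C, hC, hbound⟩ := exists_rpow_mul_norm_rpow_le_bergmanNorm_rpow hp hα
  refine ⟨C ^ p⁻¹, by positivity, fun g hg hfin z hz => ?_⟩
  have hy : 0 < 1 - ‖z‖ := sub_pos.2 (mem_ball_zero_iff.1 hz)
  set N := (bergmanNorm p α g).toReal
  have hpow : ‖g z‖ ^ p ≤ C * N ^ p * (1 - ‖z‖) ^ (-(α + 2)) := by
    have hle := hbound g hg z hz
    rw [← ENNReal.ofReal_toReal hfin.ne, ENNReal.ofReal_rpow_of_nonneg (by positivity) hp.le,
      ← ENNReal.ofReal_mul hC, ENNReal.ofReal_le_ofReal_iff (by positivity)] at hle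
    rwa [Real.rpow_neg hy.le, ← div_eq_mul_inv, le_div_iff₀' (by positivity)]
  calc ‖g z‖ = (‖g z‖ ^ p) ^ p⁻¹ := (Real.rpow_rpow_inv (norm_nonneg _) hp.ne').symm
    _ ≤ (C * N ^ p * (1 - ‖z‖) ^ (-(α + 2))) ^ p⁻¹ := by gcongr
    _ = C ^ p⁻¹ * N * (1 - ‖z‖) ^ (-((α + 2) / p)) := by
      rw [Real.mul_rpow (by positivity) (by positivity), Real.mul_rpow hC (by positivity),
        Real.rpow_rpow_inv (by positivity) hp.ne', ← Real.rpow_mul hy.le, neg_mul,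
        div_eq_mul_inv]

lemma norm_le_add_mul_rpow_of_norm_deriv_le [NormedAddCommGroup E] [NormedSpace ℝ E]
    {h h' : ℝ → E} {D γ : ℝ} (hγ : 0 < γ) (hh : ∀ t ∈ Ico (0 : ℝ) 1, HasDerivAt h (h' t) t)
    (hbound : ∀ t ∈ Ico (0 : ℝ) 1, ‖h' t‖ ≤ D * (1 - t) ^ (-(γ + 1))) {t : ℝ}
    (ht : t ∈ Ico (0 : ℝ) 1) : ‖h t‖ ≤ ‖h 0‖ + D / γ * (1 - t) ^ (-γ) := by
  have hD : 0 ≤ D := by simpa using (norm_nonneg _).trans (hbound 0 (by simp))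
  have hsub : Icc 0 t ⊆ Ico 0 1 := fun x hx => ⟨hx.1, hx.2.trans_lt ht.2⟩
  have hmajorant : ∀ x ∈ Ico (0 : ℝ) 1,
      HasDerivAt (fun x => ‖h 0‖ + D / γ * (1 - x) ^ (-γ)) (D * (1 - x) ^ (-(γ + 1))) x := by
    intro x hx
    have hx1 : 1 - x ≠ 0 := (sub_pos.2 hx.2).ne'
    refine ((((hasDerivAt_id x).const_sub 1).rpow_const (Or.inl hx1)).const_mul
      (D / γ)).const_add ‖h 0‖ |>.congr_deriv ?_
    rw [id, show -γ - 1 = -(γ + 1) by ring]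
    field_simp
  refine image_norm_le_of_norm_deriv_right_le_deriv_boundary'
    (fun x hx => (hh x (hsub hx)).continuousAt.continuousWithinAt)
    (fun x hx => (hh x (hsub (Ico_subset_Icc_self hx))).hasDerivWithinAt) ?_
    (fun x hx => (hmajorant x (hsub hx)).continuousAt.continuousWithinAt)
    (fun x hx => (hmajorant x (hsub (Ico_subset_Icc_self hx))).hasDerivWithinAt)
    (fun x hx => hbound x (hsub (Ico_subset_Icc_self hx))) ⟨ht.1, le_rfl⟩
  simpa using div_nonneg hD hγ.le

lemma ofReal_mem_ball_of_mem_Ico {t : ℝ} (ht : t ∈ Ico (0 : ℝ) 1) : (t : ℂ) ∈ ball (0 : ℂ) 1 := by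
  simpa [abs_of_nonneg ht.1] using ht.2

lemma exists_norm_ofReal_le_of_dirichletNorm_lt_top {p α γ : ℝ} (hp : 0 < p) (hα : -1 < α)
    (hγ : 0 < γ) (hαγ : (α + 2) / p ≤ γ + 1) {f : ℂ → ℂ} (hf : DifferentiableOn ℂ f (ball 0 1))
    (hfin : dirichletNorm p α f < ⊤) :
    ∃ D : ℝ, ∀ t ∈ Ico (0 : ℝ) 1, ‖f t‖ ≤ ‖f 0‖ + D * (1 - t) ^ (-γ) := by
  obtain ⟨C, hC, hbound⟩ := exists_norm_le_bergmanNorm_mul_rpow hp hα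
  set D := C * (bergmanNorm p α (deriv f)).toReal
  have hderiv : ∀ t ∈ Ico (0 : ℝ) 1, ‖deriv f t‖ ≤ D * (1 - t) ^ (-(γ + 1)) := fun t ht => by
    have ht0 : 0 < 1 - t := sub_pos.2 ht.2
    calc ‖deriv f t‖ ≤ D * (1 - t) ^ (-((α + 2) / p)) := by
          simpa [abs_of_nonneg ht.1] using hbound (deriv f) (hf.deriv isOpen_ball)
            (le_add_self.trans_lt hfin) t (ofReal_mem_ball_of_mem_Ico ht)
      _ ≤ D * (1 - t) ^ (-(γ + 1)) := by
          gcongr ?_ * ?_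
          exact Real.rpow_le_rpow_of_exponent_ge ht0 (by linarith [ht.1]) (by linarith)
  refine ⟨D / γ, fun t ht => ?_⟩
  simpa using norm_le_add_mul_rpow_of_norm_deriv_le (h := fun t : ℝ => f t) hγ
    (fun x hx => ((hf.differentiableAt
      (isOpen_ball.mem_nhds (ofReal_mem_ball_of_mem_Ico hx))).hasDerivAt.comp_ofReal)) hderiv ht

/-- `μ` is an `s`-Carleson measure on `[0,1)`: `μ([t,1)) ≤ C (1-t)^s`; the Carleson measures are
the case `s = 1`. The inequality is between extended nonnegative reals, so that it forces
`μ([0,1)) < ∞`. -/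
def IsCarleson (s : ℝ) (μ : Measure ℝ) : Prop :=
  ∃ C : ℝ, 0 ≤ C ∧ ∀ t ∈ Ico (0 : ℝ) 1, μ (Ico t 1) ≤ ENNReal.ofReal (C * (1 - t) ^ s)

lemma isCarleson_one_of_forall_toReal_le {μ : Measure ℝ} [IsFiniteMeasure μ] {C : ℝ}
    (hμ : ∀ t ∈ Ico (0 : ℝ) 1, (μ (Ico t 1)).toReal ≤ C * (1 - t)) : IsCarleson 1 μ := by
  have hC : 0 ≤ C := by simpa using ENNReal.toReal_nonneg.trans (hμ 0 (by simp))
  refine ⟨C, hC, fun t ht => ?_⟩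
  rw [Real.rpow_one]
  exact (ENNReal.le_ofReal_iff_toReal_le (measure_ne_top μ _)
    (mul_nonneg hC (sub_nonneg.2 ht.2.le))).2 (hμ t ht)

lemma IsCarleson.isFiniteMeasure {s : ℝ} {μ : Measure ℝ} (hμ : IsCarleson s μ)
    (hsupp : μ (Ico (0 : ℝ) 1)ᶜ = 0) : IsFiniteMeasure μ := by
  obtain ⟨C, -, hC⟩ := hμ
  refine ⟨?_⟩
  rw [← measure_add_measure_compl (measurableSet_Ico (a := (0 : ℝ)) (b := 1)), hsupp, add_zero]
  exact (hC 0 (by simp)).trans_lt ENNReal.ofReal_lt_top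

lemma exists_rpow_neg_le_pow_of_mem_Ico {γ t : ℝ} (hγ : 0 ≤ γ) (ht : t ∈ Ico (0 : ℝ) 1) :
    ∃ n : ℕ, t ∈ Ico (1 - (1 / 2 : ℝ) ^ n) 1 ∧ (1 - t) ^ (-γ) ≤ (2 ^ γ) ^ (n + 1) := by
  obtain ⟨n, hlower, hupper⟩ := exists_nat_pow_near_of_lt_one (x := 1 - t) (y := (1 / 2 : ℝ))
    (sub_pos.2 ht.2) (sub_le_self 1 ht.1) (by norm_num) (by norm_num)
  refine ⟨n, ⟨by linarith, ht.2⟩, ?_⟩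
  calc (1 - t) ^ (-γ) ≤ ((1 / 2 : ℝ) ^ (n + 1)) ^ (-γ) :=
        Real.rpow_le_rpow_of_nonpos (by positivity) hlower.le (neg_nonpos.2 hγ)
    _ = (2 ^ γ) ^ (n + 1) := by
        rw [Real.rpow_neg (by positivity), ← Real.inv_rpow (by positivity), one_div, inv_pow,
          inv_inv, Real.rpow_pow_comm zero_le_two]

lemma IsCarleson.lintegral_rpow_neg_lt_top {s γ : ℝ} {μ : Measure ℝ} (hμ : IsCarleson s μ)
    (hγ : 0 ≤ γ) (hγs : γ < s) :
    ∫⁻ t in Ico (0 : ℝ) 1, ENNReal.ofReal ((1 - t) ^ (-γ)) ∂μ < ⊤ := by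
  obtain ⟨C, hC, hμ⟩ := hμ
  set S : ℕ → Set ℝ := fun n => Ico (1 - (1 / 2 : ℝ) ^ n) 1
  have hterm : ∀ n : ℕ, ENNReal.ofReal ((2 ^ γ) ^ (n + 1)) * μ (S n) ≤
      ENNReal.ofReal (C * 2 ^ γ * (2 ^ (γ - s)) ^ n) := fun n => by
    have hn : (1 / 2 : ℝ) ^ n ≤ 1 := pow_le_one₀ (by norm_num) (by norm_num)
    have hn0 : (0 : ℝ) < (1 / 2 : ℝ) ^ n := by positivity
    calc ENNReal.ofReal ((2 ^ γ) ^ (n + 1)) * μ (S n)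
        ≤ ENNReal.ofReal ((2 ^ γ) ^ (n + 1)) *
            ENNReal.ofReal (C * (1 - (1 - (1 / 2 : ℝ) ^ n)) ^ s) := by
          gcongr
          exact hμ _ ⟨by linarith, by linarith⟩
      _ = ENNReal.ofReal (C * 2 ^ γ * (2 ^ (γ - s)) ^ n) := by
          rw [← ENNReal.ofReal_mul (by positivity), sub_sub_cancel,
            ← Real.rpow_pow_comm (by norm_num), Real.rpow_sub two_pos, one_div,
            Real.inv_rpow zero_le_two, pow_succ, div_pow, inv_pow]
          ring_nf
  have hsum : Summable fun n : ℕ => C * 2 ^ γ * ((2 : ℝ) ^ (γ - s)) ^ n :=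
    (summable_geometric_of_lt_one (by positivity)
      (Real.rpow_lt_one_of_one_lt_of_neg one_lt_two (sub_neg.2 hγs))).mul_left _
  calc ∫⁻ t in Ico (0 : ℝ) 1, ENNReal.ofReal ((1 - t) ^ (-γ)) ∂μ
      ≤ ∫⁻ t in Ico (0 : ℝ) 1,
          ∑' n, (S n).indicator (fun _ => ENNReal.ofReal ((2 ^ γ) ^ (n + 1))) t ∂μ := by
        refine setLIntegral_mono' measurableSet_Ico fun t ht => ?_
        obtain ⟨n, hn, hle⟩ := exists_rpow_neg_le_pow_of_mem_Ico hγ ht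
        refine le_trans ?_ (ENNReal.le_tsum n)
        rw [indicator_of_mem hn]
        exact ENNReal.ofReal_le_ofReal hle
    _ ≤ ∫⁻ t, ∑' n, (S n).indicator (fun _ => ENNReal.ofReal ((2 ^ γ) ^ (n + 1))) t ∂μ :=
        setLIntegral_le_lintegral _ _
    _ = ∑' n, ENNReal.ofReal ((2 ^ γ) ^ (n + 1)) * μ (S n) := by
        rw [lintegral_tsum fun n => (measurable_const.indicator measurableSet_Ico).aemeasurable]
        simp only [S, lintegral_indicator_const measurableSet_Ico]
    _ ≤ ∑' n, ENNReal.ofReal (C * 2 ^ γ * (2 ^ (γ - s)) ^ n) := ENNReal.tsum_le_tsum hterm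
    _ = ENNReal.ofReal (∑' n, C * 2 ^ γ * (2 ^ (γ - s)) ^ n) :=
        (ENNReal.ofReal_tsum_of_nonneg (fun n => by positivity) hsum).symm
    _ < ⊤ := ENNReal.ofReal_lt_top

lemma integrable_ofReal_of_dirichletNorm_lt_top {p α s : ℝ} {μ : Measure ℝ} (hp : 0 < p)
    (hα : -1 < α) (hs : 0 < s) (hαs : (α + 2) / p < s + 1) (hsupp : μ (Ico (0 : ℝ) 1)ᶜ = 0)
    (hμ : IsCarleson s μ) {f : ℂ → ℂ} (hf : DifferentiableOn ℂ f (ball 0 1))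
    (hfin : dirichletNorm p α f < ⊤) : Integrable (fun t : ℝ => f t) μ := by
  have := hμ.isFiniteMeasure hsupp
  have hrestrict : μ.restrict (Ico 0 1) = μ := Measure.restrict_eq_self_of_ae_mem hsupp
  obtain ⟨γ, hγ, hγs⟩ := exists_between (max_lt hs (sub_lt_iff_lt_add.2 hαs))
  obtain ⟨hγ0, hαγ⟩ := max_lt_iff.1 hγ
  obtain ⟨D, hD⟩ := exists_norm_ofReal_le_of_dirichletNorm_lt_top hp hα hγ0
    (sub_le_iff_le_add.1 hαγ.le) hf hfin
  rw [← hrestrict]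
  have hweight : IntegrableOn (fun t : ℝ => (1 - t) ^ (-γ)) (Ico 0 1) μ := by
    refine (lintegral_ofReal_ne_top_iff_integrable ?_ ?_).1
      (hμ.lintegral_rpow_neg_lt_top hγ0.le hγs).ne
    · exact (by fun_prop : Measurable fun t : ℝ => (1 - t) ^ (-γ)).aestronglyMeasurable
    · filter_upwards [ae_restrict_mem measurableSet_Ico] with t ht
      exact Real.rpow_nonneg (sub_nonneg.2 ht.2.le) _
  refine ((integrable_const ‖f 0‖).add (hweight.const_mul D)).mono' ?_ ?_
  · exact (hf.continuousOn.comp Complex.continuous_ofReal.continuousOn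
      fun t => ofReal_mem_ball_of_mem_Ico).aestronglyMeasurable measurableSet_Ico
  · filter_upwards [ae_restrict_mem measurableSet_Ico] with t ht using hD t ht

lemma tendstoUniformlyOn_setIntegral_of_aecover {Ω ι Z : Type*} [MeasurableSpace Ω]
    [NormedAddCommGroup E] [NormedSpace ℝ E] {μ : Measure Ω} {l : Filter ι}
    [l.IsCountablyGenerated] {S : ι → Set Ω} (hS : AECover μ l S) {F : Z → Ω → E}
    {bound : Ω → ℝ} {K : Set Z} (hF : ∀ z ∈ K, AEStronglyMeasurable (F z) μ)
    (hbound : Integrable bound μ) (hle : ∀ z ∈ K, ∀ᵐ t ∂μ, ‖F z t‖ ≤ bound t) :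
    TendstoUniformlyOn (fun i z => ∫ t in S i, F z t ∂μ) (fun z => ∫ t, F z t ∂μ) l K := by
  have htail : Tendsto (fun i => ∫ t in (S i)ᶜ, bound t ∂μ) l (𝓝 0) := by
    have hlim := (hS.integral_tendsto_of_countably_generated hbound).const_sub (∫ t, bound t ∂μ)
    rw [sub_self] at hlim
    exact hlim.congr fun i => (setIntegral_compl (hS.measurableSet i) hbound).symm
  rw [Metric.tendstoUniformlyOn_iff]
  intro ε hε
  filter_upwards [htail.eventually_lt_const hε] with i hi z hz
  refine lt_of_le_of_lt ?_ hi
  rw [dist_eq_norm, ← setIntegral_compl (hS.measurableSet i) (hbound.mono' (hF z hz) (hle z hz))]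
  exact norm_integral_le_of_norm_le hbound.integrableOn (ae_restrict_of_ae (hle z hz))

lemma aecover_Iio_nhdsLT {T : Type*} [LinearOrder T] [TopologicalSpace T] [OrderTopology T]
    [MeasurableSpace T] [OpensMeasurableSpace T] {μ : Measure T} {b : T} (hμ : ∀ᵐ t ∂μ, t < b) :
    AECover μ (𝓝[<] b) fun s => Iio s where
  ae_eventually_mem := by
    filter_upwards [hμ] with t ht
    exact mem_nhdsWithin_of_mem_nhds (Ioi_mem_nhds ht)
  measurableSet _ := measurableSet_Iio

lemma one_sub_le_norm_one_sub_mul {A : Type*} [SeminormedRing A] [NormOneClass A] {w z : A}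
    {R : ℝ} (hw : ‖w‖ ≤ 1) (hz : ‖z‖ ≤ R) : 1 - R ≤ ‖1 - w * z‖ := by
  have hwz : ‖w * z‖ ≤ 1 * R := (norm_mul_le w z).trans (by gcongr)
  have := norm_sub_norm_le 1 (w * z)
  rw [norm_one] at this
  linarith

section Imu

variable {μ : Measure ℝ} {f : ℂ → ℂ}

lemma aestronglyMeasurable_div_one_sub_mul
    (hf : AEStronglyMeasurable (fun t : ℝ => f t) μ) (z : ℂ) :
    AEStronglyMeasurable (fun t : ℝ => f t / (1 - t * z)) μ :=
  hf.div₀ (by fun_prop : Measurable fun t : ℝ => 1 - (t : ℂ) * z).aestronglyMeasurable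

lemma norm_div_one_sub_mul_le {t R : ℝ} {z : ℂ} (ht : |t| ≤ 1) (hz : ‖z‖ ≤ R) (hR : R < 1)
    (v : ℂ) : ‖v / (1 - t * z)‖ ≤ ‖v‖ / (1 - R) := by
  rw [norm_div]
  have : 0 < 1 - R := sub_pos.2 hR
  gcongr
  exact one_sub_le_norm_one_sub_mul (by simpa using ht) hz

lemma integrable_div_one_sub_mul (hμ : ∀ᵐ t ∂μ, |t| ≤ 1)
    (hf : Integrable (fun t : ℝ => f t) μ) {z : ℂ} (hz : z ∈ ball (0 : ℂ) 1) :
    Integrable (fun t : ℝ => f t / (1 - t * z)) μ := by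
  refine (hf.norm.div_const (1 - ‖z‖)).mono' (aestronglyMeasurable_div_one_sub_mul hf.1 z) ?_
  filter_upwards [hμ] with t ht
  exact norm_div_one_sub_mul_le ht le_rfl (mem_ball_zero_iff.1 hz) _

lemma tendstoUniformlyOn_setIntegral_Imu {ι : Type*} {l : Filter ι} [l.IsCountablyGenerated]
    {S : ι → Set ℝ} (hS : AECover μ l S) (hμ : ∀ᵐ t ∂μ, |t| ≤ 1)
    (hf : Integrable (fun t : ℝ => f t) μ) {K : Set ℂ} (hK : K ⊆ ball 0 1) (hKc : IsCompact K) :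
    TendstoUniformlyOn (fun i z => ∫ t in S i, f (t : ℂ) / (1 - (t : ℂ) * z) ∂μ) (Imu μ f)
      l K := by
  obtain ⟨R, hR, hKR⟩ := exists_lt_subset_ball hKc.isClosed hK
  refine tendstoUniformlyOn_setIntegral_of_aecover hS
    (fun z _ => aestronglyMeasurable_div_one_sub_mul hf.1 z) (hf.norm.div_const (1 - R))
    fun z hz => ?_
  filter_upwards [hμ] with t ht
  exact norm_div_one_sub_mul_le ht (mem_ball_zero_iff.1 (hKR hz)).le hR _

lemma hasDerivAt_div_one_sub_mul (v : ℂ) {w z : ℂ} (hwz : 1 - w * z ≠ 0) :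
    HasDerivAt (fun z => v / (1 - w * z)) (v * w / (1 - w * z) ^ 2) z := by
  have hden : HasDerivAt (fun z => 1 - w * z) (-w) z := by
    simpa using ((hasDerivAt_id z).const_mul w).const_sub 1
  simpa [div_eq_mul_inv, mul_assoc] using (hden.inv hwz).const_mul v

lemma differentiableOn_Imu (hμ : ∀ᵐ t ∂μ, |t| ≤ 1) (hf : Integrable (fun t : ℝ => f t) μ) :
    DifferentiableOn ℂ (Imu μ f) (ball 0 1) := by
  intro z hz
  obtain ⟨R, hzR, hR⟩ := exists_between (mem_ball_zero_iff.1 hz)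
  have hden : ∀ {t : ℝ} {w : ℂ}, |t| ≤ 1 → w ∈ ball (0 : ℂ) R → 1 - R ≤ ‖1 - t * w‖ :=
    fun ht hw => one_sub_le_norm_one_sub_mul (by simpa using ht) (mem_ball_zero_iff.1 hw).le
  have hR0 : 0 < 1 - R := sub_pos.2 hR
  refine (hasDerivAt_integral_of_dominated_loc_of_deriv_le
    (F' := fun w (t : ℝ) => f t * t / (1 - t * w) ^ 2) (bound := fun t : ℝ => ‖f t‖ / (1 - R) ^ 2)
    (isOpen_ball.mem_nhds (mem_ball_zero_iff.2 hzR))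
    (Eventually.of_forall (aestronglyMeasurable_div_one_sub_mul hf.1))
    (integrable_div_one_sub_mul hμ hf hz) ?_ ?_ (hf.norm.div_const _)
    ?_).2.differentiableAt.differentiableWithinAt
  · exact (hf.1.mul Complex.measurable_ofReal.aestronglyMeasurable).div₀
      (by fun_prop : Measurable fun t : ℝ => (1 - (t : ℂ) * z) ^ 2).aestronglyMeasurable
  · filter_upwards [hμ] with t ht w hw
    rw [norm_div, norm_mul, norm_pow, Complex.norm_real, Real.norm_eq_abs]
    gcongr
    · exact mul_le_of_le_one_right (norm_nonneg _) ht
    · exact hden ht hw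
  · filter_upwards [hμ] with t ht w hw
    exact hasDerivAt_div_one_sub_mul _ (norm_pos_iff.1 (hR0.trans_le (hden ht hw)))

end Imu

theorem Imu_wellDefined_on_Dpa_general {p α s : ℝ} (hs : 0 < s) (hα1 : -1 < α)
    (hα2 : α < (s + 1) * p - 2) {μ : Measure ℝ} (hsupp : μ (Ico (0 : ℝ) 1)ᶜ = 0)
    (hμ : IsCarleson s μ) {f : ℂ → ℂ} (hf : DifferentiableOn ℂ f (ball (0 : ℂ) 1))
    (hfin : dirichletNorm p α f < ⊤) :
    (∫⁻ t : ℝ, ENNReal.ofReal ‖f (t : ℂ)‖ ∂μ) < ⊤ ∧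
    (∀ z ∈ ball (0 : ℂ) 1, Integrable (fun t : ℝ => f (t : ℂ) / (1 - (t : ℂ) * z)) μ) ∧
    (∀ K ⊆ ball (0 : ℂ) 1, IsCompact K →
      TendstoUniformlyOn
        (fun (r : ℝ) (z : ℂ) => ∫ t in Iio r, f (t : ℂ) / (1 - (t : ℂ) * z) ∂μ)
        (Imu μ f) (𝓝[<] (1 : ℝ)) K) ∧
    DifferentiableOn ℂ (Imu μ f) (ball (0 : ℂ) 1) := by
  have hp : 0 < p := pos_of_mul_pos_right (by linarith : 0 < (s + 1) * p) (by linarith)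
  have hαs : (α + 2) / p < s + 1 := (div_lt_iff₀ hp).2 (by linarith)
  have hmem : ∀ᵐ t ∂μ, t ∈ Ico (0 : ℝ) 1 := hsupp
  have hlt : ∀ᵐ t ∂μ, t < 1 := hmem.mono fun t ht => ht.2
  have habs : ∀ᵐ t ∂μ, |t| ≤ 1 := hmem.mono fun t ht => by
    rw [abs_of_nonneg ht.1]
    exact ht.2.le
  have hint := integrable_ofReal_of_dirichletNorm_lt_top hp hα1 hs hαs hsupp hμ hf hfin
  exact ⟨(hasFiniteIntegral_iff_norm _).1 hint.2,
    fun z hz => integrable_div_one_sub_mul habs hint hz,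
    fun K hK hKc => tendstoUniformlyOn_setIntegral_Imu (aecover_Iio_nhdsLT hlt) habs hint hK hKc,
    differentiableOn_Imu habs hint⟩

/-- If `max(-1, p-2) < α < 2p-2` and `μ` is a Carleson measure on `[0,1)`,
then for every `f ∈ 𝒟^p_α` we have `∫_{[0,1)} |f(t)| dμ(t) < ∞`; consequently the integral
`I_μ f(z)` converges absolutely for every `z ∈ 𝔻`, uniformly on compact subsets of `𝔻`,
and `I_μ f` is analytic in `𝔻`. -/
theorem Imu_wellDefined_on_Dpa (p α : ℝ) (hp : 0 < p)
    (hα1 : max (-1) (p - 2) < α) (hα2 : α < 2 * p - 2)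
    (μ : Measure ℝ) [IsFiniteMeasure μ] (hsupp : μ (Ico (0 : ℝ) 1)ᶜ = 0)
    (hμ : ∃ C > 0, ∀ t ∈ Ico (0 : ℝ) 1, (μ (Ico t 1)).toReal ≤ C * (1 - t)) :
    ∀ f : ℂ → ℂ, DifferentiableOn ℂ f (ball (0 : ℂ) 1) → dirichletNorm p α f < ⊤ →
      (∫⁻ t : ℝ, ENNReal.ofReal ‖f (t : ℂ)‖ ∂μ) < ⊤ ∧
      (∀ z ∈ ball (0 : ℂ) 1, Integrable (fun t : ℝ => f (t : ℂ) / (1 - (t : ℂ) * z)) μ) ∧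
      (∀ K ⊆ ball (0 : ℂ) 1, IsCompact K →
        TendstoUniformlyOn
          (fun (s : ℝ) (z : ℂ) => ∫ t in Iio s, f (t : ℂ) / (1 - (t : ℂ) * z) ∂μ)
          (Imu μ f) (𝓝[<] (1 : ℝ)) K) ∧
      DifferentiableOn ℂ (Imu μ f) (ball (0 : ℂ) 1) := by
  obtain ⟨C, -, hC⟩ := hμ
  exact fun f hf hfin => Imu_wellDefined_on_Dpa_general one_pos ((le_max_left _ _).trans_lt hα1)
    (by linarith) hsupp (isCarleson_one_of_forall_toReal_le hC) hf hfin
end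

section
/- Let 1 < p < ∞ and α > −1, and let f(z) = ∑_{n=0}^∞ a_n z^n be analytic in the unit disc 𝔻, where {a_n} is a decreasing sequence of non-negative real numbers. Then f belongs to the weighted Bergman space A^p_α if and only if ∑_{n=1}^∞ n^{p−3−α} a_n^p < ∞. Moreover there exist constants c, C > 0 (depending only on p and α) such that c (a_0^p + ∑_{n=1}^∞ n^{p−3−α} a_n^p) ≤ ‖f‖_{A^p_α}^p ≤ C (a_0^p + ∑_{n=1}^∞ n^{p−3−α} a_n^p). -/
open MeasureTheory Set Metric Filter Asymptotics
open scoped ENNReal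

/-!
Let `A_k` be the sum of the first `2 ^ k` coefficients. Both sides of the norm equivalence are
comparable to `∑_k 2 ^ (-k (α + 2)) A_k ^ p`.

For the Bergman norm, cut the disc into shells around the point `1`. Multiplication by `1 - z` turns
the coefficients into differences of constant sign, whence `|f z| ≤ 2 A_k` for `|1 - z| ≥ 2 ^ (-k)`.
Conversely, on the disc of centre `1 - t` and radius `t / 4` with `t = 2 ^ (-k - 1)`, the function
`f` oscillates by at most a third of its central value, and that value is at least `A_k / 2`. The
shells and these discs have `dA_α`-mass comparable to `2 ^ (-k (α + 2))`.

For the coefficients, `A_k` lies between `2 ^ k a_{2 ^ k}` and `a_0 + ∑_{j < k} 2 ^ j a_{2 ^ j}`. By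
a Hardy inequality with geometric weights, replacing the inner sum by its last term changes the sum
over `k` by at most a constant factor, and by Cauchy condensation
`∑_k 2 ^ (-k (α + 2)) (2 ^ k a_{2 ^ k}) ^ p` is comparable to the sum of `n ^ (p - 3 - α) a_n ^ p`.
-/

open scoped NNReal

section DyadicSums

theorem tsum_sum_Ico_eq_tsum {u : ℕ → ℕ} (hu : StrictMono u) (F : ℕ → ℝ≥0∞) :
    ∑' k, ∑ n ∈ Finset.Ico (u k) (u (k + 1)), F n = ∑' n, F (u 0 + n) := by
  have partial_sums (K : ℕ) : ∑ k ∈ Finset.range K, ∑ n ∈ Finset.Ico (u k) (u (k + 1)), F n =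
      ∑ n ∈ Finset.range (u K - u 0), F (u 0 + n) := by
    rw [← Finset.sum_Ico_eq_sum_range]
    induction K with
    | zero => simp
    | succ K ih =>
      rw [Finset.sum_range_succ, ih,
        Finset.sum_Ico_consecutive _ (hu.monotone K.zero_le) (hu.monotone K.le_succ)]
  refine tendsto_nhds_unique (ENNReal.summable.hasSum.tendsto_sum_nat) ?_
  simp_rw [partial_sums]
  exact ENNReal.summable.hasSum.tendsto_sum_nat.comp
    ((tendsto_sub_atTop_nat (u 0)).comp hu.tendsto_atTop)

theorem tsum_succ_eq_tsum_sum_dyadic (F : ℕ → ℝ≥0∞) :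
    ∑' n, F (n + 1) = ∑' k, ∑ n ∈ Finset.Ico (2 ^ k) (2 ^ (k + 1)), F n := by
  simp [tsum_sum_Ico_eq_tsum (pow_right_strictMono₀ one_lt_two), add_comm]

theorem card_Ico_two_pow (k : ℕ) : (Finset.Ico (2 ^ k) (2 ^ (k + 1))).card = 2 ^ k := by
  rw [Nat.card_Ico, pow_succ]
  lia

variable {K : ℝ≥0∞} {F : ℕ → ℝ≥0∞}

theorem tsum_succ_le_mul_tsum_condensed (hF : ∀ m n, 0 < m → m ≤ n → n ≤ 2 * m → F n ≤ K * F m) :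
    ∑' n, F (n + 1) ≤ K * ∑' k, 2 ^ k * F (2 ^ k) := by
  rw [tsum_succ_eq_tsum_sum_dyadic, ← ENNReal.tsum_mul_left]
  refine ENNReal.tsum_le_tsum fun k ↦ ?_
  calc ∑ n ∈ Finset.Ico (2 ^ k) (2 ^ (k + 1)), F n
      ≤ ∑ _n ∈ Finset.Ico (2 ^ k) (2 ^ (k + 1)), K * F (2 ^ k) := by
        refine Finset.sum_le_sum fun n hn ↦ ?_
        rw [Finset.mem_Ico, pow_succ'] at hn
        exact hF _ n (by positivity) hn.1 hn.2.le
    _ = K * (2 ^ k * F (2 ^ k)) := by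
        rw [Finset.sum_const, card_Ico_two_pow, nsmul_eq_mul, Nat.cast_pow, Nat.cast_ofNat,
          mul_left_comm]

theorem tsum_condensed_le_mul_tsum_succ (hF : ∀ m n, 0 < m → m ≤ n → n ≤ 2 * m → F n ≤ K * F m) :
    ∑' k, 2 ^ k * F (2 ^ k) ≤ (1 + 2 * K) * ∑' n, F (n + 1) := by
  have block (k : ℕ) : 2 ^ (k + 1) * F (2 ^ (k + 1)) ≤
      2 * K * ∑ n ∈ Finset.Ico (2 ^ k) (2 ^ (k + 1)), F n :=
    calc 2 ^ (k + 1) * F (2 ^ (k + 1))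
        = 2 * ∑ _n ∈ Finset.Ico (2 ^ k) (2 ^ (k + 1)), F (2 ^ (k + 1)) := by
          rw [Finset.sum_const, card_Ico_two_pow, nsmul_eq_mul, Nat.cast_pow, Nat.cast_ofNat,
            ← mul_assoc, ← pow_succ']
      _ ≤ 2 * ∑ n ∈ Finset.Ico (2 ^ k) (2 ^ (k + 1)), K * F n := by
          gcongr with n hn
          have hpos : 0 < 2 ^ k := by positivity
          rw [Finset.mem_Ico, pow_succ'] at hn
          exact hF n _ (by lia) (by lia) (by lia)
      _ = 2 * K * ∑ n ∈ Finset.Ico (2 ^ k) (2 ^ (k + 1)), F n := by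
          rw [← Finset.mul_sum, mul_assoc]
  calc ∑' k, 2 ^ k * F (2 ^ k)
      = F 1 + ∑' k, 2 ^ (k + 1) * F (2 ^ (k + 1)) := by
        simpa using tsum_eq_zero_add' (f := fun k ↦ 2 ^ k * F (2 ^ k)) ENNReal.summable
    _ ≤ ∑' n, F (n + 1) + ∑' k, 2 * K * ∑ n ∈ Finset.Ico (2 ^ k) (2 ^ (k + 1)), F n :=
        add_le_add (ENNReal.le_tsum (f := fun n ↦ F (n + 1)) 0) (ENNReal.tsum_le_tsum block)
    _ = (1 + 2 * K) * ∑' n, F (n + 1) := by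
        rw [ENNReal.tsum_mul_left, ← tsum_succ_eq_tsum_sum_dyadic, add_mul, one_mul]

end DyadicSums

theorem rpow_le_rpow_abs_mul_rpow {K x y : ℝ≥0∞} (hxy : x ≤ K * y) (hyx : y ≤ K * x)
    (hK₀ : K ≠ 0) (hK : K ≠ ⊤) (s : ℝ) : x ^ s ≤ K ^ |s| * y ^ s := by
  rcases le_total 0 s with hs | hs
  · rw [abs_of_nonneg hs, ← ENNReal.mul_rpow_of_nonneg _ _ hs]
    gcongr
  · have hinv : x⁻¹ ≤ K * y⁻¹ :=
      calc x⁻¹ = K * (K * x)⁻¹ := by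
            rw [ENNReal.mul_inv (.inl hK₀) (.inl hK), ENNReal.mul_inv_cancel_left hK₀ hK]
        _ ≤ K * y⁻¹ := by gcongr
    have := ENNReal.rpow_le_rpow hinv (neg_nonneg.2 hs)
    rwa [ENNReal.mul_rpow_of_nonneg _ _ (neg_nonneg.2 hs), ENNReal.inv_rpow, ENNReal.inv_rpow,
      ← ENNReal.rpow_neg, ← ENNReal.rpow_neg, neg_neg, ← abs_of_nonpos hs] at this

theorem natCast_rpow_mul_le_of_antitone {g : ℕ → ℝ≥0∞} (hg : Antitone g) (s : ℝ) {m n : ℕ}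
    (hmn : m ≤ n) (hnm : n ≤ 2 * m) : (n : ℝ≥0∞) ^ s * g n ≤ 2 ^ |s| * ((m : ℝ≥0∞) ^ s * g m) := by
  have hn : (n : ℝ≥0∞) ≤ 2 * m := by exact_mod_cast hnm
  have hm : (m : ℝ≥0∞) ≤ 2 * n := by exact_mod_cast (by lia : m ≤ 2 * n)
  rw [← mul_assoc]
  exact mul_le_mul' (rpow_le_rpow_abs_mul_rpow hn hm two_ne_zero ENNReal.ofNat_ne_top s) (hg hmn)

section Hardy

theorem sum_range_pow_sub_le (w : ℝ≥0∞) (k : ℕ) :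
    ∑ j ∈ Finset.range (k + 1), w ^ (k - j) ≤ (1 - w)⁻¹ := by
  rw [← Finset.sum_range_reflect, ← ENNReal.tsum_geometric]
  refine (Finset.sum_congr rfl fun j hj ↦ ?_).trans_le (ENNReal.sum_le_tsum (Finset.range (k + 1)))
  rw [Finset.mem_range] at hj
  congr 1
  lia

theorem pow_mul_sum_range_rpow_le {p : ℝ} (hp : 0 < p) (w : ℝ≥0∞) (x : ℕ → ℝ≥0∞) (k : ℕ) :
    (w ^ k * ∑ j ∈ Finset.range (k + 1), x j) ^ p ≤
      (1 - w)⁻¹ ^ p * ∑ j ∈ Finset.range (k + 1), (w ^ j * x j) ^ p := by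
  set M := ∑ j ∈ Finset.range (k + 1), (w ^ j * x j) ^ p
  have single (j) (hj : j ∈ Finset.range (k + 1)) : w ^ j * x j ≤ M ^ p⁻¹ :=
    (ENNReal.le_rpow_inv_iff hp).2
      (Finset.single_le_sum (f := fun j ↦ (w ^ j * x j) ^ p) (fun _ _ ↦ zero_le) hj)
  have sum_le : w ^ k * ∑ j ∈ Finset.range (k + 1), x j ≤ (1 - w)⁻¹ * M ^ p⁻¹ :=
    calc w ^ k * ∑ j ∈ Finset.range (k + 1), x j
        = ∑ j ∈ Finset.range (k + 1), w ^ (k - j) * (w ^ j * x j) := by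
          rw [Finset.mul_sum]
          refine Finset.sum_congr rfl fun j hj ↦ ?_
          rw [← mul_assoc, ← pow_add, Nat.sub_add_cancel (Finset.mem_range_succ_iff.1 hj)]
      _ ≤ ∑ j ∈ Finset.range (k + 1), w ^ (k - j) * M ^ p⁻¹ := by
          gcongr with j hj
          exact single j hj
      _ ≤ (1 - w)⁻¹ * M ^ p⁻¹ := by
          rw [← Finset.sum_mul]
          gcongr
          exact sum_range_pow_sub_le w k
  calc (w ^ k * ∑ j ∈ Finset.range (k + 1), x j) ^ p
      ≤ ((1 - w)⁻¹ * M ^ p⁻¹) ^ p := by gcongr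
    _ = (1 - w)⁻¹ ^ p * M := by
        rw [ENNReal.mul_rpow_of_nonneg _ _ hp.le, ENNReal.rpow_inv_rpow hp.ne']

theorem tsum_pow_mul_sum_range (v : ℝ≥0∞) (c : ℕ → ℝ≥0∞) :
    ∑' k, v ^ k * ∑ j ∈ Finset.range (k + 1), c j = (1 - v)⁻¹ * ∑' j, v ^ j * c j := by
  calc ∑' k, v ^ k * ∑ j ∈ Finset.range (k + 1), c j
      = ∑' k, ∑ ij ∈ Finset.HasAntidiagonal.antidiagonal k, v ^ ij.2 * (v ^ ij.1 * c ij.1) := by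
        refine tsum_congr fun k ↦ ?_
        rw [← Finset.Nat.sum_antidiagonal_eq_sum_range_succ_mk (f := fun ij ↦ c ij.1),
          Finset.mul_sum]
        refine Finset.sum_congr rfl fun ij hij ↦ ?_
        rw [← mul_assoc, ← pow_add, add_comm, Finset.HasAntidiagonal.mem_antidiagonal.1 hij]
    _ = ∑' ij : ℕ × ℕ, v ^ ij.2 * (v ^ ij.1 * c ij.1) := by
        rw [← Finset.HasAntidiagonal.sigmaAntidiagonalEquivProd.tsum_eq, ENNReal.tsum_sigma']
        refine tsum_congr fun k ↦ ?_
        exact (Finset.tsum_subtype _ _).symm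
    _ = (1 - v)⁻¹ * ∑' j, v ^ j * c j := by
        rw [ENNReal.tsum_prod (f := fun i j ↦ v ^ j * (v ^ i * c i))]
        simp_rw [ENNReal.tsum_mul_right, ENNReal.tsum_geometric,
          ENNReal.tsum_mul_left]

theorem exists_tsum_pow_mul_sum_rpow_le {p : ℝ} (hp : 0 < p) {r : ℝ≥0∞} (hr : r < 1) :
    ∃ C : ℝ≥0, ∀ x : ℕ → ℝ≥0∞,
      ∑' k, r ^ k * (∑ j ∈ Finset.range (k + 1), x j) ^ p ≤ C * ∑' k, r ^ k * x k ^ p := by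
  obtain ⟨v, hv, rfl⟩ : ∃ v < 1, v * v = r :=
    ⟨r ^ (2⁻¹ : ℝ), ENNReal.rpow_lt_one hr (by norm_num), by
      rw [← sq, ← ENNReal.rpow_mul_natCast]; norm_num⟩
  obtain ⟨w, hw, rfl⟩ : ∃ w < 1, w ^ p = v :=
    ⟨v ^ p⁻¹, ENNReal.rpow_lt_one hv (by positivity), ENNReal.rpow_inv_rpow hp.ne' v⟩
  have inv_one_sub_ne_top {y : ℝ≥0∞} (hy : y < 1) : (1 - y)⁻¹ ≠ ⊤ :=
    ENNReal.inv_ne_top.2 (tsub_pos_of_lt hy).ne'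
  have hC : (1 - w)⁻¹ ^ p * (1 - w ^ p)⁻¹ ≠ ⊤ :=
    ENNReal.mul_ne_top (ENNReal.rpow_ne_top_of_nonneg hp.le (inv_one_sub_ne_top hw))
      (inv_one_sub_ne_top hv)
  -- One factor `w ^ (p k)` goes into the power, where it makes the inner sum a convolution with a
  -- geometric sequence; the other keeps the outer sum summable.
  have split (k : ℕ) (y : ℝ≥0∞) :
      (w ^ p * w ^ p) ^ k * y ^ p = (w ^ p) ^ k * (w ^ k * y) ^ p := by
    rw [ENNReal.mul_rpow_of_nonneg _ _ hp.le, ← ENNReal.rpow_natCast_mul, mul_comm (k : ℝ) p,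
      ENNReal.rpow_mul_natCast, mul_pow, mul_assoc]
  refine ⟨((1 - w)⁻¹ ^ p * (1 - w ^ p)⁻¹).toNNReal, fun x ↦ ?_⟩
  rw [ENNReal.coe_toNNReal hC]
  simp_rw [split]
  calc ∑' k, (w ^ p) ^ k * (w ^ k * ∑ j ∈ Finset.range (k + 1), x j) ^ p
      ≤ ∑' k, (w ^ p) ^ k * ((1 - w)⁻¹ ^ p * ∑ j ∈ Finset.range (k + 1), (w ^ j * x j) ^ p) := by
        gcongr with k
        exact pow_mul_sum_range_rpow_le hp w x k
    _ = (1 - w)⁻¹ ^ p * (1 - w ^ p)⁻¹ * ∑' k, (w ^ p) ^ k * (w ^ k * x k) ^ p := by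
        simp_rw [mul_left_comm _ ((1 - w)⁻¹ ^ p)]
        rw [ENNReal.tsum_mul_left, tsum_pow_mul_sum_range, mul_assoc]

end Hardy

section DyadicSum

/-- The right-hand side `b₀ ^ p + ∑_{n ≥ 1} n ^ (p - 1 - q) b_n ^ p` of the norm equivalence;
the weight `α` corresponds to `q = α + 2`. -/
noncomputable def coeffSum (p q : ℝ) (b : ℕ → ℝ≥0∞) : ℝ≥0∞ :=
  b 0 ^ p + ∑' n, ((n + 1 : ℕ) : ℝ≥0∞) ^ (p - 1 - q) * b (n + 1) ^ p

/-- The dyadic sum `∑_k 2 ^ (-kq) (b₀ + ⋯ + b_{2 ^ k - 1}) ^ p`, a discretization both of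
`coeffSum p q b` and of the integral of `|∑ b_n z ^ n| ^ p` against a measure giving mass
comparable to `ρ ^ q` to the part of the disc at distance about `ρ` from `1`. -/
noncomputable def dyadicSum (p q : ℝ) (b : ℕ → ℝ≥0∞) : ℝ≥0∞ :=
  ∑' k, (2⁻¹ ^ k) ^ q * (∑ n ∈ Finset.range (2 ^ k), b n) ^ p

theorem two_pow_mul_rpow_mul_rpow {p : ℝ} (hp : 0 ≤ p) (q : ℝ) (k : ℕ) (y : ℝ≥0∞) :
    2 ^ k * (((2 ^ k : ℕ) : ℝ≥0∞) ^ (p - 1 - q) * y ^ p) = (2⁻¹ ^ k) ^ q * (2 ^ k * y) ^ p := by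
  have pow_ne_zero : (2 ^ k : ℝ≥0∞) ≠ 0 := by positivity
  have pow_ne_top : (2 ^ k : ℝ≥0∞) ≠ ⊤ := by finiteness
  rw [ENNReal.mul_rpow_of_nonneg _ _ hp, ← ENNReal.inv_pow, ENNReal.inv_rpow, ← ENNReal.rpow_neg,
    ← mul_assoc, ← mul_assoc, ← ENNReal.rpow_add _ _ pow_ne_zero pow_ne_top, Nat.cast_pow,
    Nat.cast_ofNat]
  nth_rewrite 1 [← ENNReal.rpow_one (2 ^ k)]
  rw [← ENNReal.rpow_add _ _ pow_ne_zero pow_ne_top]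
  ring_nf

theorem coeffSum_le_mul_dyadicSum {p : ℝ} (hp : 0 < p) (q : ℝ) {b : ℕ → ℝ≥0∞} (hb : Antitone b) :
    coeffSum p q b ≤ (1 + 2 ^ |p - 1 - q|) * dyadicSum p q b := by
  have rpow_zero_le_dyadicSum : b 0 ^ p ≤ dyadicSum p q b := by
    refine le_trans ?_ (ENNReal.le_tsum 0)
    simp
  have condensed_le (k : ℕ) : 2 ^ k * (((2 ^ k : ℕ) : ℝ≥0∞) ^ (p - 1 - q) * b (2 ^ k) ^ p) ≤
      (2⁻¹ ^ k) ^ q * (∑ n ∈ Finset.range (2 ^ k), b n) ^ p := by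
    rw [two_pow_mul_rpow_mul_rpow hp.le]
    gcongr
    simpa using Finset.card_nsmul_le_sum (Finset.range (2 ^ k)) b (b (2 ^ k))
      fun n hn ↦ hb (Finset.mem_range.1 hn).le
  have anti : Antitone fun n ↦ b n ^ p := fun m n hmn ↦ ENNReal.rpow_le_rpow (hb hmn) hp.le
  calc coeffSum p q b
      ≤ dyadicSum p q b + 2 ^ |p - 1 - q| *
          ∑' k, 2 ^ k * (((2 ^ k : ℕ) : ℝ≥0∞) ^ (p - 1 - q) * b (2 ^ k) ^ p) :=
        add_le_add rpow_zero_le_dyadicSum <|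
          tsum_succ_le_mul_tsum_condensed (F := fun n ↦ (n : ℝ≥0∞) ^ (p - 1 - q) * b n ^ p)
            fun _ _ _ ↦ natCast_rpow_mul_le_of_antitone anti _
    _ ≤ dyadicSum p q b + 2 ^ |p - 1 - q| * dyadicSum p q b := by
        gcongr
        exact ENNReal.tsum_le_tsum condensed_le
    _ = (1 + 2 ^ |p - 1 - q|) * dyadicSum p q b := by rw [add_mul, one_mul]

theorem sum_range_two_pow_le_of_antitone {b : ℕ → ℝ≥0∞} (hb : Antitone b) (k : ℕ) :
    ∑ n ∈ Finset.range (2 ^ k), b n ≤ b 0 + ∑ j ∈ Finset.range k, 2 ^ j * b (2 ^ j) := by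
  simpa using Finset.le_sum_condensed (fun _ _ _ hmn ↦ hb hmn) k

theorem exists_dyadicSum_le_condensed {p q : ℝ} (hp : 0 < p) (hq : 0 < q) :
    ∃ C : ℝ≥0, ∀ b : ℕ → ℝ≥0∞, Antitone b → dyadicSum p q b ≤
      C * (b 0 ^ p + ∑' k, (2⁻¹ ^ k) ^ q * (2 ^ k * b (2 ^ k)) ^ p) := by
  have ratio_lt_one : (2⁻¹ : ℝ≥0∞) ^ q < 1 :=
    ENNReal.rpow_lt_one (ENNReal.inv_lt_one.2 ENNReal.one_lt_two) hq
  have pow_rpow (k : ℕ) : ((2⁻¹ : ℝ≥0∞) ^ k) ^ q = (2⁻¹ ^ q) ^ k := by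
    rw [← ENNReal.rpow_natCast_mul, mul_comm, ENNReal.rpow_mul_natCast]
  obtain ⟨C, hardy⟩ := exists_tsum_pow_mul_sum_rpow_le hp ratio_lt_one
  refine ⟨C, fun b hb ↦ ?_⟩
  let x : ℕ → ℝ≥0∞ := fun | 0 => b 0 | j + 1 => 2 ^ j * b (2 ^ j)
  calc dyadicSum p q b
      ≤ ∑' k, (2⁻¹ ^ q) ^ k * (∑ j ∈ Finset.range (k + 1), x j) ^ p := by
        refine ENNReal.tsum_le_tsum fun k ↦ ?_
        rw [pow_rpow, Finset.sum_range_succ', add_comm]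
        gcongr
        exact sum_range_two_pow_le_of_antitone hb k
    _ ≤ C * ∑' k, (2⁻¹ ^ q) ^ k * x k ^ p := hardy x
    _ = C * (b 0 ^ p + ∑' k, (2⁻¹ ^ q) ^ (k + 1) * (2 ^ k * b (2 ^ k)) ^ p) := by
        rw [tsum_eq_zero_add' ENNReal.summable, pow_zero, one_mul]
    _ ≤ C * (b 0 ^ p + ∑' k, (2⁻¹ ^ k) ^ q * (2 ^ k * b (2 ^ k)) ^ p) := by
        gcongr with k
        rw [pow_rpow]
        exact pow_le_pow_right_of_le_one' ratio_lt_one.le k.le_succ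

theorem exists_dyadicSum_le_mul_coeffSum {p q : ℝ} (hp : 0 < p) (hq : 0 < q) :
    ∃ C : ℝ≥0, ∀ b : ℕ → ℝ≥0∞, Antitone b → dyadicSum p q b ≤ C * coeffSum p q b := by
  obtain ⟨C, hC⟩ := exists_dyadicSum_le_condensed hp hq
  refine ⟨C * (1 + 2 * 2 ^ |p - 1 - q|), fun b hb ↦ ?_⟩
  have anti : Antitone fun n ↦ b n ^ p := fun m n hmn ↦ ENNReal.rpow_le_rpow (hb hmn) hp.le
  calc dyadicSum p q b
      ≤ C * (b 0 ^ p + ∑' k, (2⁻¹ ^ k) ^ q * (2 ^ k * b (2 ^ k)) ^ p) := hC b hb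
    _ ≤ C * (b 0 ^ p + (1 + 2 * 2 ^ |p - 1 - q|) *
          ∑' n, ((n + 1 : ℕ) : ℝ≥0∞) ^ (p - 1 - q) * b (n + 1) ^ p) := by
        simp_rw [← two_pow_mul_rpow_mul_rpow hp.le]
        gcongr
        exact tsum_condensed_le_mul_tsum_succ (F := fun n ↦ (n : ℝ≥0∞) ^ (p - 1 - q) * b n ^ p)
          fun _ _ _ ↦ natCast_rpow_mul_le_of_antitone anti _
    _ ≤ C * ((1 + 2 * 2 ^ |p - 1 - q|) * coeffSum p q b) := by
        rw [coeffSum, mul_add (1 + _)]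
        gcongr
        exact le_mul_of_one_le_left' le_self_add
    _ = ↑(C * (1 + 2 * 2 ^ |p - 1 - q|)) * coeffSum p q b := by
        push_cast
        rw [ENNReal.coe_rpow_of_ne_zero two_ne_zero, ENNReal.coe_ofNat, mul_assoc]

end DyadicSum

section PowerSeries

theorem hasSum_sub_succ_mul_pow_succ {R : Type*} [CommRing R] [TopologicalSpace R]
    [IsTopologicalRing R] {b : ℕ → R} {z S : R} (hS : HasSum (fun n ↦ b n * z ^ n) S) :
    HasSum (fun n ↦ (b n - b (n + 1)) * z ^ (n + 1)) (b 0 - (1 - z) * S) := by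
  have shifted : HasSum (fun n ↦ b (n + 1) * z ^ (n + 1)) (S - b 0) := by
    simpa using (hasSum_nat_add_iff' 1).2 hS
  have sum_eq : z * S - (S - b 0) = b 0 - (1 - z) * S := by ring
  rw [← sum_eq]
  exact ((hS.mul_left z).sub shifted).congr_fun fun n ↦ by ring

theorem norm_one_sub_mul_le {a : ℕ → ℝ} (ha : Antitone a) (ha₀ : ∀ n, 0 ≤ a n) {z S : ℂ}
    (hz : ‖z‖ ≤ 1) (hS : HasSum (fun n ↦ (a n : ℂ) * z ^ n) S) : ‖(1 - z) * S‖ ≤ 2 * a 0 := by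
  have term_le (n : ℕ) : ‖((a n : ℂ) - a (n + 1)) * z ^ (n + 1)‖ ≤ a n - a (n + 1) := by
    rw [← Complex.ofReal_sub, norm_mul, norm_pow, Complex.norm_of_nonneg
      (sub_nonneg.2 (ha n.le_succ))]
    exact mul_le_of_le_one_right (sub_nonneg.2 (ha n.le_succ)) (pow_le_one₀ (norm_nonneg z) hz)
  have partial_le (s : Finset ℕ) :
      ‖∑ n ∈ s, ((a n : ℂ) - a (n + 1)) * z ^ (n + 1)‖ ≤ a 0 := by
    obtain ⟨N, hN⟩ := s.exists_nat_subset_range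
    calc ‖∑ n ∈ s, ((a n : ℂ) - a (n + 1)) * z ^ (n + 1)‖
        ≤ ∑ n ∈ s, (a n - a (n + 1)) := norm_sum_le_of_le s fun n _ ↦ term_le n
      _ ≤ ∑ n ∈ Finset.range N, (a n - a (n + 1)) :=
          Finset.sum_le_sum_of_subset_of_nonneg hN fun n _ _ ↦ sub_nonneg.2 (ha n.le_succ)
      _ ≤ a 0 := by
          rw [Finset.sum_range_sub']
          linarith [ha₀ N]
  have differences_le : ‖a 0 - (1 - z) * S‖ ≤ a 0 :=
    le_of_tendsto (hasSum_sub_succ_mul_pow_succ hS).norm (Eventually.of_forall partial_le)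
  calc ‖(1 - z) * S‖ = ‖(a 0 : ℂ) - (a 0 - (1 - z) * S)‖ := by rw [sub_sub_cancel]
    _ ≤ ‖(a 0 : ℂ)‖ + ‖a 0 - (1 - z) * S‖ := norm_sub_le _ _
    _ ≤ 2 * a 0 := by
        rw [Complex.norm_of_nonneg (ha₀ 0)]
        linarith

theorem norm_le_two_mul_sum_range {a : ℕ → ℝ} (ha : Antitone a) (ha₀ : ∀ n, 0 ≤ a n) {z S : ℂ}
    (hz : ‖z‖ ≤ 1) (hS : HasSum (fun n ↦ (a n : ℂ) * z ^ n) S) {N : ℕ}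
    (hN : 1 ≤ N * ‖1 - z‖) : ‖S‖ ≤ 2 * ∑ n ∈ Finset.range N, a n := by
  -- Levelling the first `N` coefficients down to `a N` keeps the sequence antitone, so that
  -- `norm_one_sub_mul_le` applies to what remains after removing the polynomial `P`.
  set P : ℂ := ∑ n ∈ Finset.range N, ((a n - a N : ℝ) : ℂ) * z ^ n
  have hasSum_head :
      HasSum (fun n ↦ ((a n - a (max n N) : ℝ) : ℂ) * z ^ n) P := by
    have P_eq : P = ∑ n ∈ Finset.range N, ((a n - a (max n N) : ℝ) : ℂ) * z ^ n :=
      Finset.sum_congr rfl fun n hn ↦ by rw [max_eq_right (Finset.mem_range.1 hn).le]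
    rw [P_eq]
    refine hasSum_sum_of_ne_finset_zero fun n hn ↦ ?_
    rw [max_eq_left (not_lt.1 (mt Finset.mem_range.2 hn))]
    simp
  have hasSum_tail : HasSum (fun n ↦ (a (max n N) : ℂ) * z ^ n) (S - P) :=
    (hS.sub hasSum_head).congr_fun fun n ↦ by
      push_cast
      ring
  have tail_le : ‖S - P‖ ≤ 2 * (N * a N) := by
    have := norm_one_sub_mul_le (a := fun n ↦ a (max n N))
      (fun m n hmn ↦ ha (max_le_max_right N hmn)) (fun n ↦ ha₀ _) hz hasSum_tail
    rw [norm_mul, Nat.zero_max] at this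
    have := ha₀ N
    calc ‖S - P‖ ≤ N * ‖1 - z‖ * ‖S - P‖ := le_mul_of_one_le_left (norm_nonneg _) hN
      _ = N * (‖1 - z‖ * ‖S - P‖) := mul_assoc ..
      _ ≤ N * (2 * a N) := by gcongr
      _ = 2 * (N * a N) := mul_left_comm ..
  have head_le : ‖P‖ ≤ ∑ n ∈ Finset.range N, a n - N * a N := by
    calc ‖P‖ ≤ ∑ n ∈ Finset.range N, (a n - a N) := by
          refine norm_sum_le_of_le _ fun n hn ↦ ?_
          have : 0 ≤ a n - a N := sub_nonneg.2 (ha (Finset.mem_range.1 hn).le)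
          rw [norm_mul, norm_pow, Complex.norm_of_nonneg this]
          exact mul_le_of_le_one_right this (pow_le_one₀ (norm_nonneg z) hz)
      _ = ∑ n ∈ Finset.range N, a n - N * a N := by simp
  have head_dominates : N * a N ≤ ∑ n ∈ Finset.range N, a n := by
    simpa using Finset.card_nsmul_le_sum (Finset.range N) a (a N)
      fun n hn ↦ ha (Finset.mem_range.1 hn).le
  calc ‖S‖ = ‖(S - P) + P‖ := by rw [sub_add_cancel]
    _ ≤ ‖S - P‖ + ‖P‖ := norm_add_le _ _
    _ ≤ 2 * ∑ n ∈ Finset.range N, a n := by linarith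

theorem one_sub_mul_le_one_sub_mul {a : ℕ → ℝ} (ha : Antitone a) {x y X Y : ℝ} (hx : 0 ≤ x)
    (hxy : x ≤ y) (hX : HasSum (fun n ↦ a n * x ^ n) X) (hY : HasSum (fun n ↦ a n * y ^ n) Y) :
    (1 - y) * Y ≤ (1 - x) * X := by
  have := hasSum_le (fun n ↦ ?_) (hasSum_sub_succ_mul_pow_succ hX) (hasSum_sub_succ_mul_pow_succ hY)
  · linarith
  · have := sub_nonneg.2 (ha n.le_succ)
    gcongr

theorem norm_pow_sub_pow_le {R : Type*} [SeminormedRing R] [NormOneClass R] {z w : R} {h : ℝ}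
    (hzw : ‖z - w‖ ≤ h) (n : ℕ) : ‖z ^ n - w ^ n‖ ≤ (‖w‖ + h) ^ n - ‖w‖ ^ n := by
  have norm_z_le : ‖z‖ ≤ ‖w‖ + h := by
    linarith [norm_le_norm_add_norm_sub' z w]
  induction n with
  | zero => simp
  | succ n ih =>
    calc ‖z ^ (n + 1) - w ^ (n + 1)‖ = ‖(z - w) * z ^ n + w * (z ^ n - w ^ n)‖ := by
          congr 1
          rw [pow_succ', pow_succ']
          noncomm_ring
      _ ≤ ‖z - w‖ * ‖z ^ n‖ + ‖w‖ * ‖z ^ n - w ^ n‖ :=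
          (norm_add_le _ _).trans (add_le_add (norm_mul_le _ _) (norm_mul_le _ _))
      _ ≤ h * (‖w‖ + h) ^ n + ‖w‖ * ((‖w‖ + h) ^ n - ‖w‖ ^ n) := by
          have : 0 ≤ h := (norm_nonneg _).trans hzw
          gcongr
          exact (norm_pow_le z n).trans (pow_le_pow_left₀ (norm_nonneg z) norm_z_le n)
      _ = (‖w‖ + h) ^ (n + 1) - ‖w‖ ^ (n + 1) := by ring

theorem norm_sub_le_of_hasSum_mul_pow {a : ℕ → ℝ} (ha₀ : ∀ n, 0 ≤ a n) {z S T : ℂ} {x h X Y : ℝ}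
    (hx : 0 ≤ x) (hz : ‖z - x‖ ≤ h) (hS : HasSum (fun n ↦ (a n : ℂ) * z ^ n) S)
    (hT : HasSum (fun n ↦ (a n : ℂ) * (x : ℂ) ^ n) T)
    (hX : HasSum (fun n ↦ a n * x ^ n) X) (hY : HasSum (fun n ↦ a n * (x + h) ^ n) Y) :
    ‖S - T‖ ≤ Y - X := by
  rw [← (hS.sub hT).tsum_eq]
  refine tsum_of_norm_bounded (hY.sub hX) fun n ↦ ?_
  have := norm_pow_sub_pow_le hz n
  rw [Complex.norm_of_nonneg hx] at this
  rw [← mul_sub, ← mul_sub, norm_mul, Complex.norm_of_nonneg (ha₀ n)]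
  gcongr
  exact ha₀ n

theorem hasSum_norm_of_hasSum_ofReal {ι : Type*} {g : ι → ℝ} (hg : ∀ i, 0 ≤ g i) {S : ℂ}
    (hS : HasSum (fun i ↦ (g i : ℂ)) S) : HasSum g ‖S‖ := by
  obtain ⟨X, hX⟩ := Complex.summable_ofReal.1 hS.summable
  rw [hS.unique (Complex.hasSum_ofReal.2 hX), Complex.norm_of_nonneg (hX.nonneg hg)]
  exact hX

theorem sum_range_le_two_mul_of_hasSum {a : ℕ → ℝ} (ha₀ : ∀ n, 0 ≤ a n) {t X : ℝ} {N : ℕ}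
    (ht₀ : 0 ≤ t) (ht₁ : t ≤ 1) (hNt : N * t ≤ 1 / 2) (hX : HasSum (fun n ↦ a n * (1 - t) ^ n) X) :
    ∑ n ∈ Finset.range N, a n ≤ 2 * X := by
  have half_le_pow (n : ℕ) (hn : n ∈ Finset.range N) : 1 / 2 ≤ (1 - t) ^ n :=
    calc (1 : ℝ) / 2 ≤ 1 - N * t := by linarith
      _ ≤ 1 + n * (-t) := by
          have : (n : ℝ) ≤ N := by exact_mod_cast (Finset.mem_range.1 hn).le
          nlinarith
      _ ≤ (1 + -t) ^ n := one_add_mul_le_pow (by linarith) n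
      _ = (1 - t) ^ n := by rw [sub_eq_add_neg]
  calc ∑ n ∈ Finset.range N, a n ≤ ∑ n ∈ Finset.range N, 2 * (a n * (1 - t) ^ n) :=
        Finset.sum_le_sum fun n hn ↦ by nlinarith [half_le_pow n hn, ha₀ n]
    _ = 2 * ∑ n ∈ Finset.range N, a n * (1 - t) ^ n := by rw [Finset.mul_sum]
    _ ≤ 2 * X := by
        gcongr
        exact sum_le_hasSum _ (fun n _ ↦ mul_nonneg (ha₀ n) (pow_nonneg (by linarith) n)) hX

theorem sum_range_le_three_mul_norm {a : ℕ → ℝ} (ha : Antitone a) (ha₀ : ∀ n, 0 ≤ a n)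
    {f : ℂ → ℂ} (hf : ∀ z ∈ ball (0 : ℂ) 1, HasSum (fun n ↦ (a n : ℂ) * z ^ n) (f z))
    {t : ℝ} (ht₀ : 0 < t) (ht₁ : t ≤ 1) {N : ℕ} (hNt : N * t ≤ 1 / 2) {z : ℂ}
    (hz : z ∈ ball ((1 - t : ℝ) : ℂ) (t / 4)) : ∑ n ∈ Finset.range N, a n ≤ 3 * ‖f z‖ := by
  have hasSum_real {x : ℝ} (hx₀ : 0 ≤ x) (hx₁ : x < 1) : HasSum (fun n ↦ a n * x ^ n) ‖f x‖ := by
    refine hasSum_norm_of_hasSum_ofReal (fun n ↦ mul_nonneg (ha₀ n) (pow_nonneg hx₀ n)) ?_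
    push_cast
    exact hf x (by rwa [mem_ball_zero_iff, Complex.norm_of_nonneg hx₀])
  have hX := hasSum_real (x := 1 - t) (by linarith) (by linarith)
  have hY := hasSum_real (x := 1 - t + t / 4) (by linarith) (by linarith)
  have hz_norm : ‖z - (1 - t : ℝ)‖ ≤ t / 4 := (mem_ball_iff_norm.1 hz).le
  have z_mem : z ∈ ball (0 : ℂ) 1 := by
    have := norm_le_norm_add_norm_sub' z (1 - t : ℝ)
    rw [Complex.norm_of_nonneg (by linarith)] at this
    rw [mem_ball_zero_iff]
    linarith
  have sum_le := sum_range_le_two_mul_of_hasSum ha₀ ht₀.le ht₁ hNt hX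
  have growth := one_sub_mul_le_one_sub_mul ha (by linarith) (by linarith) hX hY
  have oscillation := norm_sub_le_of_hasSum_mul_pow ha₀ (by linarith) hz_norm (hf z z_mem)
    (hf _ (by rw [mem_ball_zero_iff, Complex.norm_of_nonneg] <;> linarith)) hX hY
  have reverse_triangle := norm_le_norm_add_norm_sub (f z) (f (1 - t : ℝ))
  have hY_le : ‖f (1 - t + t / 4 : ℝ)‖ ≤ 4 / 3 * ‖f (1 - t : ℝ)‖ :=
    le_of_mul_le_mul_left (by linarith) (show 0 < 3 * t / 4 by linarith)
  linarith

end PowerSeries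

section CarlesonMeasure

theorem ofReal_two_inv_pow (k : ℕ) : ENNReal.ofReal (2⁻¹ ^ k) = 2⁻¹ ^ k := by
  rw [ENNReal.ofReal_pow (by norm_num), ENNReal.ofReal_inv_of_pos two_pos, ENNReal.ofReal_ofNat]

theorem exists_two_inv_pow_le_norm_one_sub_le {z : ℂ} (hz : z ∈ ball (0 : ℂ) 1) :
    ∃ k : ℕ, 2⁻¹ ^ k ≤ ‖1 - z‖ ∧ ‖1 - z‖ ≤ 2 * 2⁻¹ ^ k := by
  rw [mem_ball_zero_iff] at hz
  have norm_pos : 0 < ‖1 - z‖ := by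
    rw [norm_pos_iff, sub_ne_zero]
    rintro rfl
    simp at hz
  have norm_le_two : ‖1 - z‖ ≤ 2 := by
    linarith [norm_sub_le 1 z, norm_one (α := ℂ)]
  obtain ⟨k, hk, hk'⟩ := exists_nat_pow_near_of_lt_one (y := (2⁻¹ : ℝ)) (half_pos norm_pos)
    (by linarith) (by norm_num) (by norm_num)
  rw [pow_succ] at hk
  exact ⟨k, by linarith, by linarith⟩

theorem pairwise_disjoint_ball_one_sub_two_inv_pow : Pairwise fun j k : ℕ ↦
    Disjoint (ball ((1 - 2⁻¹ ^ (j + 1) : ℝ) : ℂ) (2⁻¹ ^ (j + 1) / 4))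
      (ball ((1 - 2⁻¹ ^ (k + 1) : ℝ) : ℂ) (2⁻¹ ^ (k + 1) / 4)) := by
  refine (pairwise_disjoint_on _).2 fun j k hjk ↦ ball_disjoint_ball ?_
  have pow_le : (2⁻¹ : ℝ) ^ (k + 1) ≤ 2⁻¹ ^ (j + 1) * 2⁻¹ := by
    rw [← pow_succ]
    exact pow_le_pow_of_le_one (by norm_num) (by norm_num) (by lia)
  have pow_pos : (0 : ℝ) < 2⁻¹ ^ (j + 1) := by positivity
  rw [Complex.dist_eq, ← Complex.ofReal_sub, Complex.norm_real, Real.norm_eq_abs, le_abs]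
  right
  linarith

variable {p q : ℝ} {μ : Measure ℂ} {C : ℝ≥0∞}

theorem measure_closedBall_two_mul_two_inv_pow_le
    (hμ : ∀ ρ > 0, μ (closedBall 1 ρ) ≤ C * ENNReal.ofReal ρ ^ q) (k : ℕ) :
    μ (closedBall 1 (2 * 2⁻¹ ^ k)) ≤ C * 2 ^ q * (2⁻¹ ^ k) ^ q :=
  calc μ (closedBall 1 (2 * 2⁻¹ ^ k)) ≤ C * ENNReal.ofReal (2 * 2⁻¹ ^ k) ^ q :=
        hμ _ (by positivity)
    _ = C * 2 ^ q * (2⁻¹ ^ k) ^ q := by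
        rw [ENNReal.ofReal_mul two_pos.le, ofReal_two_inv_pow, ENNReal.ofReal_ofNat,
          ENNReal.mul_rpow_of_ne_top (by finiteness) (by finiteness), mul_assoc]

variable {a : ℕ → ℝ} (ha : Antitone a) (ha₀ : ∀ n, 0 ≤ a n) {f : ℂ → ℂ}
  (hf : ∀ z ∈ ball (0 : ℂ) 1, HasSum (fun n ↦ (a n : ℂ) * z ^ n) (f z))
include ha ha₀ hf

theorem enorm_le_two_mul_sum_range_two_pow {z : ℂ} (hz : z ∈ ball (0 : ℂ) 1) {k : ℕ}
    (hk : 2⁻¹ ^ k ≤ ‖1 - z‖) : ‖f z‖ₑ ≤ 2 * ∑ n ∈ Finset.range (2 ^ k), ENNReal.ofReal (a n) := by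
  rw [inv_pow, inv_le_iff_one_le_mul₀' (by positivity)] at hk
  rw [← ofReal_norm, ← ENNReal.ofReal_sum_of_nonneg fun n _ ↦ ha₀ n, ← ENNReal.ofReal_ofNat,
    ← ENNReal.ofReal_mul two_pos.le]
  gcongr
  exact norm_le_two_mul_sum_range ha ha₀ (mem_ball_zero_iff.1 hz).le (hf z hz)
    (by exact_mod_cast hk)

theorem lintegral_enorm_rpow_le_mul_dyadicSum (hp : 0 ≤ p) (hμ_disc : ∀ᵐ z ∂μ, z ∈ ball (0 : ℂ) 1)
    (hμ : ∀ ρ > 0, μ (closedBall 1 ρ) ≤ C * ENNReal.ofReal ρ ^ q) :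
    ∫⁻ z, ‖f z‖ₑ ^ p ∂μ ≤ C * 2 ^ q * 2 ^ p * dyadicSum p q (fun n ↦ ENNReal.ofReal (a n)) := by
  set A : ℕ → ℝ≥0∞ := fun k ↦ ∑ n ∈ Finset.range (2 ^ k), ENNReal.ofReal (a n)
  set shell : ℕ → Set ℂ := fun k ↦
    {z | z ∈ ball 0 1 ∧ 2⁻¹ ^ k ≤ ‖1 - z‖ ∧ ‖1 - z‖ ≤ 2 * 2⁻¹ ^ k}
  have mem_shells : ∀ᵐ z ∂μ, z ∈ ⋃ k, shell k := by
    filter_upwards [hμ_disc] with z hz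
    obtain ⟨k, hk⟩ := exists_two_inv_pow_le_norm_one_sub_le hz
    exact mem_iUnion.2 ⟨k, hz, hk⟩
  have measure_shell_le (k : ℕ) : μ (shell k) ≤ C * 2 ^ q * (2⁻¹ ^ k) ^ q := by
    refine (measure_mono fun z hz ↦ ?_).trans (measure_closedBall_two_mul_two_inv_pow_le hμ k)
    rw [mem_closedBall_iff_norm']
    exact hz.2.2
  calc ∫⁻ z, ‖f z‖ₑ ^ p ∂μ = ∫⁻ z in ⋃ k, shell k, ‖f z‖ₑ ^ p ∂μ := by
        rw [Measure.restrict_eq_self_of_ae_mem mem_shells]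
    _ ≤ ∑' k, ∫⁻ z in shell k, ‖f z‖ₑ ^ p ∂μ := lintegral_iUnion_le _ _
    _ ≤ ∑' k, (2 * A k) ^ p * μ (shell k) := by
        refine ENNReal.tsum_le_tsum fun k ↦ ?_
        rw [← setLIntegral_const]
        refine setLIntegral_mono measurable_const fun z hz ↦ ?_
        gcongr
        exact enorm_le_two_mul_sum_range_two_pow ha ha₀ hf hz.1 hz.2.1
    _ ≤ ∑' k, (2 * A k) ^ p * (C * 2 ^ q * (2⁻¹ ^ k) ^ q) := by
        gcongr with k
        exact measure_shell_le k
    _ = C * 2 ^ q * 2 ^ p * dyadicSum p q (fun n ↦ ENNReal.ofReal (a n)) := by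
        rw [dyadicSum, ← ENNReal.tsum_mul_left]
        refine tsum_congr fun k ↦ ?_
        rw [ENNReal.mul_rpow_of_nonneg _ _ hp]
        ring

theorem sum_range_two_pow_le_three_mul_enorm {k : ℕ} {z : ℂ}
    (hz : z ∈ ball ((1 - 2⁻¹ ^ (k + 1) : ℝ) : ℂ) (2⁻¹ ^ (k + 1) / 4)) :
    ∑ n ∈ Finset.range (2 ^ k), ENNReal.ofReal (a n) ≤ 3 * ‖f z‖ₑ := by
  rw [← ofReal_norm, ← ENNReal.ofReal_sum_of_nonneg fun n _ ↦ ha₀ n, ← ENNReal.ofReal_ofNat 3,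
    ← ENNReal.ofReal_mul three_pos.le]
  gcongr
  refine sum_range_le_three_mul_norm ha ha₀ hf (by positivity)
    (pow_le_one₀ (by norm_num) (by norm_num)) ?_ hz
  simp [pow_succ]

theorem dyadicSum_le_mul_lintegral_enorm_rpow (hp : 0 ≤ p)
    (hμ : ∀ t, 0 < t → t ≤ 1 / 2 →
      ENNReal.ofReal t ^ q ≤ C * μ (ball ((1 - t : ℝ) : ℂ) (t / 4))) :
    dyadicSum p q (fun n ↦ ENNReal.ofReal (a n)) ≤ C * 2 ^ q * 3 ^ p * ∫⁻ z, ‖f z‖ₑ ^ p ∂μ := by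
  set disc : ℕ → Set ℂ := fun k ↦ ball ((1 - 2⁻¹ ^ (k + 1) : ℝ) : ℂ) (2⁻¹ ^ (k + 1) / 4)
  have rpow_le_measure_disc (k : ℕ) : (2⁻¹ ^ k) ^ q ≤ C * 2 ^ q * μ (disc k) :=
    calc ((2⁻¹ : ℝ≥0∞) ^ k) ^ q = 2 ^ q * ENNReal.ofReal (2⁻¹ ^ (k + 1)) ^ q := by
          rw [← ENNReal.mul_rpow_of_ne_top (by finiteness) (by finiteness), ofReal_two_inv_pow,
            pow_succ', ENNReal.mul_inv_cancel_left two_ne_zero ENNReal.ofNat_ne_top]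
      _ ≤ 2 ^ q * (C * μ (disc k)) := by
          gcongr
          exact hμ _ (by positivity) <| by
            simpa [inv_le_comm₀] using inv_anti₀ two_pos (le_self_pow₀ one_le_two k.succ_ne_zero)
      _ = C * 2 ^ q * μ (disc k) := by rw [mul_left_comm, mul_assoc]
  calc dyadicSum p q (fun n ↦ ENNReal.ofReal (a n))
      ≤ ∑' k, C * 2 ^ q * ((∑ n ∈ Finset.range (2 ^ k), ENNReal.ofReal (a n)) ^ p *
          μ (disc k)) := by
        refine ENNReal.tsum_le_tsum fun k ↦ ?_
        rw [mul_left_comm, mul_comm]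
        gcongr
        exact rpow_le_measure_disc k
    _ ≤ ∑' k, C * 2 ^ q * ∫⁻ z in disc k, (3 * ‖f z‖ₑ) ^ p ∂μ := by
        gcongr with k
        rw [← setLIntegral_const]
        refine setLIntegral_mono' measurableSet_ball fun z hz ↦ ?_
        gcongr
        exact sum_range_two_pow_le_three_mul_enorm ha ha₀ hf hz
    _ = C * 2 ^ q * ∫⁻ z in ⋃ k, disc k, (3 * ‖f z‖ₑ) ^ p ∂μ := by
        rw [ENNReal.tsum_mul_left, lintegral_iUnion (fun _ ↦ measurableSet_ball)
          pairwise_disjoint_ball_one_sub_two_inv_pow]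
    _ ≤ C * 2 ^ q * ∫⁻ z, (3 * ‖f z‖ₑ) ^ p ∂μ := by
        gcongr
        exact Measure.restrict_le_self
    _ = C * 2 ^ q * 3 ^ p * ∫⁻ z, ‖f z‖ₑ ^ p ∂μ := by
        simp_rw [ENNReal.mul_rpow_of_nonneg _ _ hp]
        rw [lintegral_const_mul' _ _ (by finiteness), ← mul_assoc]

end CarlesonMeasure

section Polar

theorem abs_arg_le_pi_mul_norm_one_sub (z : ℂ) : |z.arg| ≤ Real.pi * ‖1 - z‖ := by
  rcases eq_or_ne z 0 with rfl | hz
  · simp [Real.pi_nonneg]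
  have norm_pos : 0 < ‖z‖ := norm_pos_iff.2 hz
  set u : ℂ := ‖z‖⁻¹ • z
  have norm_u : ‖u‖ = 1 := by
    rw [norm_smul, norm_inv, norm_norm, inv_mul_cancel₀ norm_pos.ne']
  have norm_sub_u : ‖z - u‖ ≤ ‖1 - z‖ := by
    have : z - u = (‖z‖ - 1) • u := by
      rw [sub_smul, one_smul, smul_inv_smul₀ norm_pos.ne']
    rw [this, norm_smul, norm_u, mul_one, Real.norm_eq_abs, norm_sub_rev, ← norm_one (α := ℂ)]
    exact abs_norm_sub_norm_le z 1
  calc |z.arg| = InnerProductGeometry.angle 1 u := by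
        rw [InnerProductGeometry.angle_smul_right_of_pos _ _ (inv_pos.2 norm_pos),
          Complex.angle_one_left hz]
    _ ≤ Real.pi / 2 * ‖1 - u‖ := Complex.angle_le_mul_norm_sub norm_one norm_u
    _ ≤ Real.pi / 2 * (‖1 - z‖ + ‖z - u‖) := by
        gcongr
        exact norm_sub_le_norm_sub_add_norm_sub 1 z u
    _ ≤ Real.pi / 2 * (‖1 - z‖ + ‖1 - z‖) := by gcongr
    _ = Real.pi * ‖1 - z‖ := by ring

theorem lintegral_norm_mul_arg {g h : ℝ → ℝ≥0∞} (hg : Measurable g) (hh : Measurable h) :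
    ∫⁻ z : ℂ, g ‖z‖ * h z.arg =
      (∫⁻ r in Ioi 0, ENNReal.ofReal r * g r) * ∫⁻ θ in Ioo (-Real.pi) Real.pi, h θ := by
  rw [← Complex.lintegral_comp_polarCoord_symm, ← lintegral_prod_mul (by fun_prop) (by fun_prop),
    Measure.prod_restrict, ← Measure.volume_eq_prod]
  refine setLIntegral_congr_fun polarCoord.open_target.measurableSet fun x hx ↦ ?_
  obtain ⟨hr, hθ⟩ := hx
  rw [Complex.norm_polarCoord_symm, abs_of_pos hr, Complex.polarCoord_symm_apply,
    Complex.ofReal_cos, Complex.ofReal_sin,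
    Complex.arg_mul_cos_add_sin_mul_I hr (Ioo_subset_Ioc_self hθ), smul_eq_mul, mul_assoc]

theorem lintegral_Ioc_zero_ofReal_rpow {α : ℝ} (hα : -1 < α) {ρ : ℝ} (hρ : 0 ≤ ρ) :
    ∫⁻ x in Ioc 0 ρ, ENNReal.ofReal x ^ α =
      ENNReal.ofReal ρ ^ (α + 1) / ENNReal.ofReal (α + 1) := by
  calc ∫⁻ x in Ioc 0 ρ, ENNReal.ofReal x ^ α = ∫⁻ x in Ioc 0 ρ, ENNReal.ofReal (x ^ α) :=
        setLIntegral_congr_fun measurableSet_Ioc fun x hx ↦ ENNReal.ofReal_rpow_of_pos hx.1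
    _ = ENNReal.ofReal (∫ x in (0)..ρ, x ^ α) := by
        rw [intervalIntegral.integral_of_le hρ, ofReal_integral_eq_lintegral_ofReal]
        · exact (intervalIntegral.intervalIntegrable_rpow' hα).1
        · exact (ae_restrict_iff' measurableSet_Ioc).2 <| .of_forall fun x hx ↦
            Real.rpow_nonneg hx.1.le α
    _ = ENNReal.ofReal ρ ^ (α + 1) / ENNReal.ofReal (α + 1) := by
        have : 0 < α + 1 := by linarith
        rw [integral_rpow (.inl hα), Real.zero_rpow this.ne', sub_zero,
          ENNReal.ofReal_div_of_pos this, ENNReal.ofReal_rpow_of_nonneg hρ this.le]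

theorem lintegral_Ico_one_sub_ofReal_one_sub_rpow {α : ℝ} (hα : -1 < α) {ρ : ℝ} (hρ : 0 ≤ ρ) :
    ∫⁻ r in Ico (1 - ρ) 1, ENNReal.ofReal (1 - r) ^ α =
      ENNReal.ofReal ρ ^ (α + 1) / ENNReal.ofReal (α + 1) := by
  rw [← lintegral_Ioc_zero_ofReal_rpow hα hρ,
    ← (Measure.measurePreserving_sub_left volume (1 : ℝ)).setLIntegral_comp_preimage
      measurableSet_Ioc (by fun_prop), preimage_const_sub_Ioc, sub_zero]

theorem norm_mem_Ico_and_arg_mem_Icc {ρ : ℝ} {z : ℂ} (hz : z ∈ closedBall (1 : ℂ) ρ ∩ ball 0 1) :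
    ‖z‖ ∈ Ico (1 - ρ) 1 ∧ z.arg ∈ Icc (-(Real.pi * ρ)) (Real.pi * ρ) := by
  obtain ⟨hz_near, hz_disc⟩ := hz
  rw [mem_closedBall_iff_norm'] at hz_near
  rw [mem_ball_zero_iff] at hz_disc
  have := norm_le_norm_add_norm_sub' 1 z
  rw [norm_one] at this
  exact ⟨⟨by linarith, hz_disc⟩, abs_le.1 ((abs_arg_le_pi_mul_norm_one_sub z).trans (by gcongr))⟩

theorem lintegral_norm_closedBall_one_inter_ball_le {g : ℝ → ℝ≥0∞} (hg : Measurable g) (ρ : ℝ) :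
    ∫⁻ z in closedBall (1 : ℂ) ρ ∩ ball 0 1, g ‖z‖ ≤
      ENNReal.ofReal (2 * Real.pi * ρ) * ∫⁻ r in Ico (1 - ρ) 1, g r := by
  set radial : ℝ → ℝ≥0∞ := (Ico (1 - ρ) 1).indicator g
  set angular : ℝ → ℝ≥0∞ := (Icc (-(Real.pi * ρ)) (Real.pi * ρ)).indicator 1
  have integrand_le (z : ℂ) (hz : z ∈ closedBall (1 : ℂ) ρ ∩ ball 0 1) :
      g ‖z‖ ≤ radial ‖z‖ * angular z.arg := by
    obtain ⟨norm_mem, arg_mem⟩ := norm_mem_Ico_and_arg_mem_Icc hz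
    simp [radial, angular, indicator_of_mem norm_mem, indicator_of_mem arg_mem]
  have radial_le : ∫⁻ r in Ioi 0, ENNReal.ofReal r * radial r ≤ ∫⁻ r in Ico (1 - ρ) 1, g r :=
    calc ∫⁻ r in Ioi 0, ENNReal.ofReal r * radial r ≤ ∫⁻ r, radial r := by
          refine (setLIntegral_le_lintegral _ _).trans (lintegral_mono fun r ↦ ?_)
          by_cases hr : r ∈ Ico (1 - ρ) 1
          · exact mul_le_of_le_one_left' (ENNReal.ofReal_le_one.2 hr.2.le)
          · simp [radial, indicator_of_notMem hr]
      _ = ∫⁻ r in Ico (1 - ρ) 1, g r := lintegral_indicator measurableSet_Ico g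
  have angular_le : ∫⁻ θ in Ioo (-Real.pi) Real.pi, angular θ ≤ ENNReal.ofReal (2 * Real.pi * ρ) :=
    calc ∫⁻ θ in Ioo (-Real.pi) Real.pi, angular θ ≤ ∫⁻ θ, angular θ :=
          setLIntegral_le_lintegral _ _
      _ = ENNReal.ofReal (2 * Real.pi * ρ) := by
          rw [lintegral_indicator_one measurableSet_Icc, Real.volume_Icc]
          ring_nf
  calc ∫⁻ z in closedBall (1 : ℂ) ρ ∩ ball 0 1, g ‖z‖
      ≤ ∫⁻ z in closedBall (1 : ℂ) ρ ∩ ball 0 1, radial ‖z‖ * angular z.arg :=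
        setLIntegral_mono' (measurableSet_closedBall.inter measurableSet_ball) integrand_le
    _ ≤ ∫⁻ z : ℂ, radial ‖z‖ * angular z.arg := setLIntegral_le_lintegral _ _
    _ = (∫⁻ r in Ioi 0, ENNReal.ofReal r * radial r) *
          ∫⁻ θ in Ioo (-Real.pi) Real.pi, angular θ :=
        lintegral_norm_mul_arg (hg.indicator measurableSet_Ico)
          (measurable_one.indicator measurableSet_Icc)
    _ ≤ ENNReal.ofReal (2 * Real.pi * ρ) * ∫⁻ r in Ico (1 - ρ) 1, g r := by
        rw [mul_comm]
        gcongr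

end Polar

section WeightedArea

theorem dA_ball (z : ℂ) (r : ℝ) : dA (ball z r) = ENNReal.ofReal r ^ 2 := by
  have pi_ne_zero : ENNReal.ofReal Real.pi ≠ 0 := (ENNReal.ofReal_pos.2 Real.pi_pos).ne'
  rw [dA, Measure.smul_apply, Complex.volume_ball, ← ENNReal.ofReal_coe_nnreal, NNReal.coe_real_pi,
    smul_eq_mul, mul_left_comm, ENNReal.inv_mul_cancel pi_ne_zero ENNReal.ofReal_ne_top, mul_one]

/-- The measure `dA_α = (α + 1) (1 - |z|²) ^ α dA` on the unit disc, extended by zero to `ℂ`: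
its integrals of `|f| ^ p` are the `p`-th powers of Bergman norms. -/
noncomputable def weightedArea (α : ℝ) : Measure ℂ :=
  ENNReal.ofReal (α + 1) •
    (dA.restrict (ball 0 1)).withDensity fun z ↦ ENNReal.ofReal (1 - ‖z‖ ^ 2) ^ α

theorem ae_weightedArea_mem_ball (α : ℝ) : ∀ᵐ z ∂weightedArea α, z ∈ ball (0 : ℂ) 1 :=
  Measure.ae_smul_measure
    ((withDensity_absolutelyContinuous _ _).ae_le (ae_restrict_mem measurableSet_ball)) _

theorem one_sub_norm_sq_pos {z : ℂ} (hz : z ∈ ball (0 : ℂ) 1) : 0 < 1 - ‖z‖ ^ 2 := by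
  rw [mem_ball_zero_iff] at hz
  nlinarith [norm_nonneg z]

theorem bergmanNorm_rpow_s8 {p : ℝ} (hp : 0 < p) (α : ℝ) (f : ℂ → ℂ) :
    bergmanNorm p α f ^ p = ∫⁻ z, ‖f z‖ₑ ^ p ∂weightedArea α := by
  have density_lt_top :
      ∀ᵐ z ∂dA.restrict (ball 0 1), ENNReal.ofReal (1 - ‖z‖ ^ 2) ^ α < ⊤ := by
    filter_upwards [ae_restrict_mem measurableSet_ball] with z hz
    rw [ENNReal.ofReal_rpow_of_pos (one_sub_norm_sq_pos hz)]
    exact ENNReal.ofReal_lt_top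
  rw [bergmanNorm, one_div, ENNReal.rpow_inv_rpow hp.ne', weightedArea, lintegral_smul_measure,
    lintegral_withDensity_eq_lintegral_mul_non_measurable _ (by fun_prop) density_lt_top,
    smul_eq_mul]
  congr 1
  refine setLIntegral_congr_fun measurableSet_ball fun z hz ↦ ?_
  simp only [Pi.mul_apply]
  rw [ENNReal.ofReal_mul' (by positivity), ← ENNReal.ofReal_rpow_of_pos (one_sub_norm_sq_pos hz),
    ← ENNReal.ofReal_rpow_of_nonneg (norm_nonneg _) hp.le, ofReal_norm]

theorem weightedArea_apply (α : ℝ) {s : Set ℂ} (hs : MeasurableSet s) :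
    weightedArea α s = ENNReal.ofReal (α + 1) / ENNReal.ofReal Real.pi *
      ∫⁻ z in s ∩ ball 0 1, ENNReal.ofReal (1 - ‖z‖ ^ 2) ^ α := by
  rw [weightedArea, Measure.smul_apply, withDensity_apply _ hs, Measure.restrict_restrict hs, dA,
    Measure.restrict_smul, lintegral_smul_measure, smul_eq_mul, smul_eq_mul, ← mul_assoc,
    div_eq_mul_inv]

theorem ofReal_one_sub_norm_sq_rpow_le (α : ℝ) {z : ℂ} (hz : z ∈ ball (0 : ℂ) 1) :
    ENNReal.ofReal (1 - ‖z‖ ^ 2) ^ α ≤ 2 ^ |α| * ENNReal.ofReal (1 - ‖z‖) ^ α := by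
  have h₀ := norm_nonneg z
  have h₁ := mem_ball_zero_iff.1 hz
  refine rpow_le_rpow_abs_mul_rpow ?_ ?_ two_ne_zero ENNReal.ofNat_ne_top α <;>
    rw [← ENNReal.ofReal_ofNat, ← ENNReal.ofReal_mul two_pos.le] <;>
    gcongr <;> nlinarith

theorem weightedArea_closedBall_one_le {α : ℝ} (hα : -1 < α) {ρ : ℝ} (hρ : 0 < ρ) :
    weightedArea α (closedBall 1 ρ) ≤ 2 * 2 ^ |α| * ENNReal.ofReal ρ ^ (α + 2) := by
  set c := ENNReal.ofReal (α + 1)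
  set P := ENNReal.ofReal Real.pi
  set r := ENNReal.ofReal ρ
  have hc : c ≠ 0 := (ENNReal.ofReal_pos.2 (by linarith)).ne'
  have hP : P ≠ 0 := (ENNReal.ofReal_pos.2 Real.pi_pos).ne'
  have hr : r ≠ 0 := (ENNReal.ofReal_pos.2 hρ).ne'
  calc weightedArea α (closedBall 1 ρ)
      = c / P * ∫⁻ z in closedBall (1 : ℂ) ρ ∩ ball 0 1, ENNReal.ofReal (1 - ‖z‖ ^ 2) ^ α :=
        weightedArea_apply α measurableSet_closedBall
    _ ≤ c / P * ∫⁻ z in closedBall (1 : ℂ) ρ ∩ ball 0 1,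
          2 ^ |α| * ENNReal.ofReal (1 - ‖z‖) ^ α :=
        mul_le_mul' le_rfl <| setLIntegral_mono'
          (measurableSet_closedBall.inter measurableSet_ball) fun z hz ↦
            ofReal_one_sub_norm_sq_rpow_le α hz.2
    _ ≤ c / P * (2 ^ |α| * (ENNReal.ofReal (2 * Real.pi * ρ) *
          ∫⁻ r in Ico (1 - ρ) 1, ENNReal.ofReal (1 - r) ^ α)) := by
        rw [lintegral_const_mul' _ _ (by finiteness)]
        gcongr
        exact lintegral_norm_closedBall_one_inter_ball_le
          (g := fun r ↦ ENNReal.ofReal (1 - r) ^ α) (by fun_prop) ρ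
    _ = c * c⁻¹ * (P * P⁻¹) * (2 * 2 ^ |α| * (r ^ (α + 1) * r)) := by
        rw [lintegral_Ico_one_sub_ofReal_one_sub_rpow hα hρ.le, ENNReal.ofReal_mul (by positivity),
          ENNReal.ofReal_mul two_pos.le, ENNReal.ofReal_ofNat, div_eq_mul_inv, div_eq_mul_inv]
        ring
    _ = 2 * 2 ^ |α| * r ^ (α + 2) := by
        rw [ENNReal.mul_inv_cancel hc ENNReal.ofReal_ne_top,
          ENNReal.mul_inv_cancel hP ENNReal.ofReal_ne_top, one_mul, one_mul,
          show α + 2 = α + 1 + 1 by ring, ENNReal.rpow_add (α + 1) 1 hr ENNReal.ofReal_ne_top,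
          ENNReal.rpow_one]

theorem mem_ball_and_ofReal_rpow_le_of_mem_ball (α : ℝ) {t : ℝ} (ht₀ : 0 < t) (ht₁ : t ≤ 1) {z : ℂ}
    (hz : z ∈ ball ((1 - t : ℝ) : ℂ) (t / 4)) :
    z ∈ ball (0 : ℂ) 1 ∧
      ENNReal.ofReal t ^ α ≤ 4 ^ |α| * ENNReal.ofReal (1 - ‖z‖ ^ 2) ^ α := by
  rw [mem_ball_iff_norm] at hz
  have norm_center : ‖((1 - t : ℝ) : ℂ)‖ = 1 - t := Complex.norm_of_nonneg (by linarith)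
  have norm_le : ‖z‖ ≤ 1 - 3 * t / 4 := by
    linarith [norm_le_norm_add_norm_sub' z (1 - t : ℝ)]
  have le_norm : 1 - 5 * t / 4 ≤ ‖z‖ := by
    linarith [norm_le_norm_add_norm_sub z (1 - t : ℝ)]
  have norm_nonneg := norm_nonneg z
  refine ⟨by rw [mem_ball_zero_iff]; linarith,
    rpow_le_rpow_abs_mul_rpow ?_ ?_ four_ne_zero ENNReal.ofNat_ne_top α⟩ <;>
    rw [← ENNReal.ofReal_ofNat, ← ENNReal.ofReal_mul four_pos.le] <;>
    gcongr <;> nlinarith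

theorem ofReal_rpow_le_mul_weightedArea_ball {α : ℝ} (hα : -1 < α) {t : ℝ} (ht₀ : 0 < t)
    (ht₁ : t ≤ 1) : ENNReal.ofReal t ^ (α + 2) ≤
      16 * 4 ^ |α| / ENNReal.ofReal (α + 1) * weightedArea α (ball ((1 - t : ℝ) : ℂ) (t / 4)) := by
  set c := ENNReal.ofReal (α + 1)
  set P := ENNReal.ofReal Real.pi
  set r := ENNReal.ofReal t
  set B : Set ℂ := ball ((1 - t : ℝ) : ℂ) (t / 4)
  have hc : c ≠ 0 := (ENNReal.ofReal_pos.2 (by linarith)).ne'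
  have hr : r ≠ 0 := (ENNReal.ofReal_pos.2 ht₀).ne'
  have B_subset : B ⊆ ball 0 1 := fun z hz ↦
    (mem_ball_and_ofReal_rpow_le_of_mem_ball α ht₀ ht₁ hz).1
  have sq_eq : r ^ 2 = 16 * P⁻¹ * volume B :=
    calc r ^ 2 = 16 * dA B := by
          rw [dA_ball, ← ENNReal.ofReal_pow ht₀.le, ← ENNReal.ofReal_pow (by positivity),
            ← ENNReal.ofReal_ofNat 16, ← ENNReal.ofReal_mul (by norm_num)]
          ring_nf
      _ = 16 * P⁻¹ * volume B := by rw [dA, Measure.smul_apply, smul_eq_mul, mul_assoc]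
  calc r ^ (α + 2) = r ^ α * (16 * P⁻¹ * volume B) := by
        rw [← sq_eq, ENNReal.rpow_add _ _ hr ENNReal.ofReal_ne_top, ENNReal.rpow_ofNat]
    _ = 16 * P⁻¹ * ∫⁻ _z in B, r ^ α := by
        rw [setLIntegral_const]
        ring
    _ ≤ 16 * P⁻¹ * ∫⁻ z in B, 4 ^ |α| * ENNReal.ofReal (1 - ‖z‖ ^ 2) ^ α :=
        mul_le_mul' le_rfl <| setLIntegral_mono' measurableSet_ball fun z hz ↦
          (mem_ball_and_ofReal_rpow_le_of_mem_ball α ht₀ ht₁ hz).2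
    _ = c * c⁻¹ * (16 * 4 ^ |α| * P⁻¹ * ∫⁻ z in B, ENNReal.ofReal (1 - ‖z‖ ^ 2) ^ α) := by
        rw [lintegral_const_mul' _ _ (by finiteness), ENNReal.mul_inv_cancel hc
          ENNReal.ofReal_ne_top]
        ring
    _ = 16 * 4 ^ |α| / c * weightedArea α B := by
        rw [weightedArea_apply α measurableSet_ball, inter_eq_left.2 B_subset, div_eq_mul_inv,
          div_eq_mul_inv]
        ring

end WeightedArea

section BergmanNorm

variable {p α : ℝ}

theorem exists_pos_le_ofReal {K : ℝ≥0∞} (hK : K ≠ ⊤) : ∃ C > 0, K ≤ ENNReal.ofReal C := by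
  refine ⟨K.toReal + 1, by positivity, ?_⟩
  grw [← le_add_of_nonneg_right zero_le_one, ENNReal.ofReal_toReal hK]

theorem exists_bergmanNorm_rpow_le (hp : 0 < p) (hα : -1 < α) :
    ∃ C > 0, ∀ (f : ℂ → ℂ) (a : ℕ → ℝ), (∀ n, 0 ≤ a n) → Antitone a →
      (∀ z ∈ ball (0 : ℂ) 1, HasSum (fun n ↦ (a n : ℂ) * z ^ n) (f z)) →
      bergmanNorm p α f ^ p ≤
        ENNReal.ofReal C * coeffSum p (α + 2) (fun n ↦ ENNReal.ofReal (a n)) := by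
  obtain ⟨D, hD⟩ := exists_dyadicSum_le_mul_coeffSum (q := α + 2) hp (by linarith)
  obtain ⟨C, hC₀, hC⟩ := exists_pos_le_ofReal
    (K := 2 * 2 ^ |α| * 2 ^ (α + 2) * 2 ^ p * D) (by finiteness)
  refine ⟨C, hC₀, fun f a ha₀ ha hf ↦ ?_⟩
  have anti : Antitone fun n ↦ ENNReal.ofReal (a n) := ENNReal.ofReal_mono.comp_antitone ha
  rw [bergmanNorm_rpow_s8 hp]
  grw [lintegral_enorm_rpow_le_mul_dyadicSum ha ha₀ hf hp.le (ae_weightedArea_mem_ball α)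
    fun ρ ↦ weightedArea_closedBall_one_le hα, hD _ anti,
    ← mul_assoc, hC]

theorem exists_mul_coeffSum_le_bergmanNorm_rpow (hp : 0 < p) (hα : -1 < α) :
    ∃ c > 0, ∀ (f : ℂ → ℂ) (a : ℕ → ℝ), (∀ n, 0 ≤ a n) → Antitone a →
      (∀ z ∈ ball (0 : ℂ) 1, HasSum (fun n ↦ (a n : ℂ) * z ^ n) (f z)) →
      ENNReal.ofReal c * coeffSum p (α + 2) (fun n ↦ ENNReal.ofReal (a n)) ≤
        bergmanNorm p α f ^ p := by
  have normalization_ne_zero : ENNReal.ofReal (α + 1) ≠ 0 :=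
    (ENNReal.ofReal_pos.2 (by linarith)).ne'
  obtain ⟨C, hC₀, hC⟩ := exists_pos_le_ofReal (K := (1 + 2 ^ |p - 1 - (α + 2)|) *
    (16 * 4 ^ |α| / ENNReal.ofReal (α + 1) * 2 ^ (α + 2) * 3 ^ p)) (by finiteness)
  refine ⟨C⁻¹, inv_pos.2 hC₀, fun f a ha₀ ha hf ↦ ?_⟩
  have anti : Antitone fun n ↦ ENNReal.ofReal (a n) := ENNReal.ofReal_mono.comp_antitone ha
  rw [ENNReal.ofReal_inv_of_pos hC₀,
    ENNReal.inv_mul_le_iff (ENNReal.ofReal_pos.2 hC₀).ne' ENNReal.ofReal_ne_top,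
    bergmanNorm_rpow_s8 hp]
  grw [coeffSum_le_mul_dyadicSum hp _ anti,
    dyadicSum_le_mul_lintegral_enorm_rpow ha ha₀ hf hp.le fun t ht₀ ht₁ ↦
      ofReal_rpow_le_mul_weightedArea_ball hα ht₀ (ht₁.trans (by norm_num)),
    ← mul_assoc, hC]

theorem coeffSum_ofReal (hp : 0 < p) (q : ℝ) {a : ℕ → ℝ} (ha₀ : ∀ n, 0 ≤ a n) :
    coeffSum p q (fun n ↦ ENNReal.ofReal (a n)) = ENNReal.ofReal (a 0 ^ p) +
      ∑' n : ℕ, ENNReal.ofReal (((n + 1 : ℕ) : ℝ) ^ (p - 1 - q) * a (n + 1) ^ p) := by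
  rw [coeffSum, ENNReal.ofReal_rpow_of_nonneg (ha₀ 0) hp.le]
  congr 1
  refine tsum_congr fun n ↦ ?_
  have succ_pos : (0 : ℝ) < (n + 1 : ℕ) := by positivity
  rw [ENNReal.ofReal_mul (by positivity), ENNReal.ofReal_rpow_of_nonneg (ha₀ _) hp.le,
    ← ENNReal.ofReal_rpow_of_pos succ_pos, ENNReal.ofReal_natCast]

theorem ofReal_add_tsum_ofReal_lt_top_iff {x : ℝ} {g : ℕ → ℝ} (hg : ∀ n, 0 ≤ g n) :
    ENNReal.ofReal x + ∑' n, ENNReal.ofReal (g n) < ⊤ ↔ Summable g := by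
  rw [ENNReal.add_lt_top, and_iff_right ENNReal.ofReal_lt_top]
  refine ⟨fun h ↦ ?_, fun h ↦ h.tsum_ofReal_lt_top⟩
  simpa only [ENNReal.toReal_ofReal (hg _)] using ENNReal.summable_toReal h.ne

theorem lt_top_iff_of_mul_le_of_le_mul {x y : ℝ≥0∞} {c C : ℝ} (hc : 0 < c)
    (lower : ENNReal.ofReal c * x ≤ y) (upper : y ≤ ENNReal.ofReal C * x) : y < ⊤ ↔ x < ⊤ := by
  refine ⟨fun hy ↦ ?_, fun hx ↦ upper.trans_lt (ENNReal.mul_lt_top ENNReal.ofReal_lt_top hx)⟩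
  exact ENNReal.lt_top_of_mul_ne_top_right (lower.trans_lt hy).ne (ENNReal.ofReal_pos.2 hc).ne'

end BergmanNorm

theorem Apa_decreasing_coefficients_general (p α : ℝ) (hp : 0 < p) (hα : -1 < α) :
    ∃ c > 0, ∃ C > 0, ∀ (f : ℂ → ℂ) (a : ℕ → ℝ),
      (∀ n, 0 ≤ a n) → (∀ n, a (n + 1) ≤ a n) →
      (∀ z ∈ ball (0 : ℂ) 1, HasSum (fun n : ℕ => (a n : ℂ) * z ^ n) (f z)) →
      ((bergmanNorm p α f < ⊤ ↔
          Summable (fun n : ℕ => ((n + 1 : ℕ) : ℝ) ^ (p - 3 - α) * a (n + 1) ^ p)) ∧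
        ENNReal.ofReal c *
            (ENNReal.ofReal (a 0 ^ p) +
              ∑' n : ℕ, ENNReal.ofReal (((n + 1 : ℕ) : ℝ) ^ (p - 3 - α) * a (n + 1) ^ p))
          ≤ bergmanNorm p α f ^ p ∧
        bergmanNorm p α f ^ p ≤
          ENNReal.ofReal C *
            (ENNReal.ofReal (a 0 ^ p) +
              ∑' n : ℕ, ENNReal.ofReal (((n + 1 : ℕ) : ℝ) ^ (p - 3 - α) * a (n + 1) ^ p))) := by
  obtain ⟨c, hc, lower⟩ := exists_mul_coeffSum_le_bergmanNorm_rpow hp hα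
  obtain ⟨C, hC, upper⟩ := exists_bergmanNorm_rpow_le hp hα
  refine ⟨c, hc, C, hC, fun f a ha₀ ha hf ↦ ?_⟩
  have lower := lower f a ha₀ (antitone_nat_of_succ_le ha) hf
  have upper := upper f a ha₀ (antitone_nat_of_succ_le ha) hf
  have finite_iff := lt_top_iff_of_mul_le_of_le_mul hc lower upper
  rw [ENNReal.rpow_lt_top_iff_of_pos hp] at finite_iff
  rw [coeffSum_ofReal hp _ ha₀, show p - 1 - (α + 2) = p - 3 - α by ring] at lower upper finite_iff
  have terms_nonneg (n : ℕ) : 0 ≤ ((n + 1 : ℕ) : ℝ) ^ (p - 3 - α) * a (n + 1) ^ p :=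
    mul_nonneg (by positivity) (Real.rpow_nonneg (ha₀ _) p)
  exact ⟨finite_iff.trans (ofReal_add_tsum_ofReal_lt_top_iff terms_nonneg), lower, upper⟩

/-- For `1 < p < ∞`, `α > -1` and `f(z) = ∑ a_n z^n` with `{a_n}` a
decreasing sequence of non-negative reals: `f ∈ A^p_α` iff `∑_{n≥1} n^{p-3-α} a_n^p < ∞`,
and `‖f‖_{A^p_α}^p ≍ a_0^p + ∑_{n≥1} n^{p-3-α} a_n^p` with constants depending only on
`p` and `α`. -/
theorem Apa_decreasing_coefficients (p α : ℝ) (hp : 1 < p) (hα : -1 < α) :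
    ∃ c > 0, ∃ C > 0, ∀ (f : ℂ → ℂ) (a : ℕ → ℝ),
      (∀ n, 0 ≤ a n) → (∀ n, a (n + 1) ≤ a n) →
      (∀ z ∈ ball (0 : ℂ) 1, HasSum (fun n : ℕ => (a n : ℂ) * z ^ n) (f z)) →
      ((bergmanNorm p α f < ⊤ ↔
          Summable (fun n : ℕ => ((n + 1 : ℕ) : ℝ) ^ (p - 3 - α) * a (n + 1) ^ p)) ∧
        ENNReal.ofReal c *
            (ENNReal.ofReal (a 0 ^ p) +
              ∑' n : ℕ, ENNReal.ofReal (((n + 1 : ℕ) : ℝ) ^ (p - 3 - α) * a (n + 1) ^ p))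
          ≤ bergmanNorm p α f ^ p ∧
        bergmanNorm p α f ^ p ≤
          ENNReal.ofReal C *
            (ENNReal.ofReal (a 0 ^ p) +
              ∑' n : ℕ, ENNReal.ofReal (((n + 1 : ℕ) : ℝ) ^ (p - 3 - α) * a (n + 1) ^ p))) :=
  Apa_decreasing_coefficients_general p α (by linarith) hα
end
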